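/- arXiv:math/0606007 — 4 statements merged into one kernel-verified Lean document; each statement's English description precedes it below -/
import Mathlib

section
/- Let P be a polygonal curve in ℝ^d with vertex list v₀, v₁, …, vₙ in which no two consecutive vertices are equal, and let P' be the polygon obtained from P by deleting one interior vertex v_j (0 < j < n). Then TC(P') ≤ TC(P). Moreover, equality holds if v_{j−1}, v_j, v_{j+1} are collinear with v_j lying on the segment from v_{j−1} to v_{j+1}. -/
open Set Filter MeasureTheory
open scoped ENNReal NNReal RealInnerProductSpace

noncomputable section

/-- The parameters `u 0 < u 1 < ⋯ < u m` of a polygon inscribed in (the restriction to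
`[a,b]` of) a curve: strictly increasing parameters lying in `[a,b]`. -/
def InscribedIn (a b : ℝ) (m : ℕ) (u : ℕ → ℝ) : Prop :=
  (∀ i < m, u i < u (i + 1)) ∧ ∀ i ≤ m, u i ∈ Set.Icc a b

/-- The length of the polygon inscribed in the curve `γ` with parameters `u 0, …, u m`:
the sum of the euclidean lengths of its edges. -/
def polyLen {E : Type*} [NormedAddCommGroup E] (γ : ℝ → E) (m : ℕ) (u : ℕ → ℝ) : ℝ :=
  ∑ i ∈ Finset.range m, ‖γ (u (i + 1)) - γ (u i)‖

/-- The (Jordan) length of the arc `γ : [a,b] → E`: the supremum of the lengths of all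
inscribed polygons, valued in `[0,∞]`. -/
def arcLen {E : Type*} [NormedAddCommGroup E] (γ : ℝ → E) (a b : ℝ) : ℝ≥0∞ :=
  ⨆ (m : ℕ) (u : ℕ → ℝ) (_ : InscribedIn a b m u), ENNReal.ofReal (polyLen γ m u)

/-- The list of vertices of the polygon inscribed in `γ` with parameters `u 0, …, u m`. -/
def vertexList {E : Type*} (γ : ℝ → E) (m : ℕ) (u : ℕ → ℝ) : List E :=
  (List.range (m + 1)).map fun i => γ (u i)

/-- Collapse consecutive equal entries of a list to single entries. -/
def collapse {E : Type*} (l : List E) : List E :=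
  @List.destutter E (· ≠ ·) (Classical.decRel _) l

/-- The sum of the turning angles of a polygon given by its list of vertices: at each
interior vertex, the angle in `[0,π]` between the incoming and outgoing edge vectors. -/
def turnSum {E : Type*} [NormedAddCommGroup E] [InnerProductSpace ℝ E] : List E → ℝ
  | a :: b :: c :: l => InnerProductGeometry.angle (b - a) (c - b) + turnSum (b :: c :: l)
  | _ => 0

/-- The sum, at each interior vertex, of the euclidean distance `‖u₊ - u₋‖` between the
unit tangent vectors of the incoming and outgoing edges (so a corner of turning angle θ
contributes `2 sin(θ/2)`). -/
def starSum {E : Type*} [NormedAddCommGroup E] [InnerProductSpace ℝ E] : List E → ℝ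
  | a :: b :: c :: l =>
      ‖(‖c - b‖⁻¹ • (c - b)) - (‖b - a‖⁻¹ • (b - a))‖ + starSum (b :: c :: l)
  | _ => 0

/-- The total curvature of the polygon inscribed in `γ` with parameters `u 0, …, u m`:
after collapsing consecutive equal vertices, the sum of its turning angles. -/
def polyTC {E : Type*} [NormedAddCommGroup E] [InnerProductSpace ℝ E]
    (γ : ℝ → E) (m : ℕ) (u : ℕ → ℝ) : ℝ :=
  turnSum (collapse (vertexList γ m u))

/-- The total curvature of the arc `γ : [a,b] → E`: the supremum over all inscribed
polygons of their total curvature, valued in `[0,∞]`. -/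
def arcTC {E : Type*} [NormedAddCommGroup E] [InnerProductSpace ℝ E]
    (γ : ℝ → E) (a b : ℝ) : ℝ≥0∞ :=
  ⨆ (m : ℕ) (u : ℕ → ℝ) (_ : InscribedIn a b m u), ENNReal.ofReal (polyTC γ m u)

/-- The euclidean total curvature `TC*` of the polygon inscribed in `γ` with parameters
`u 0, …, u m`. -/
def polyTCStar {E : Type*} [NormedAddCommGroup E] [InnerProductSpace ℝ E]
    (γ : ℝ → E) (m : ℕ) (u : ℕ → ℝ) : ℝ :=
  starSum (collapse (vertexList γ m u))

/-- The euclidean total curvature `TC*` of the arc `γ : [a,b] → E`. -/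
def arcTCStar {E : Type*} [NormedAddCommGroup E] [InnerProductSpace ℝ E]
    (γ : ℝ → E) (a b : ℝ) : ℝ≥0∞ :=
  ⨆ (m : ℕ) (u : ℕ → ℝ) (_ : InscribedIn a b m u), ENNReal.ofReal (polyTCStar γ m u)

/-- Cyclically ordered parameters `u 0 < ⋯ < u m` in `[0,1)` of a polygon inscribed in a
loop `γ : ℝ/ℤ → E`. -/
def LoopInscribed (m : ℕ) (u : ℕ → ℝ) : Prop :=
  (∀ i < m, u i < u (i + 1)) ∧ ∀ i ≤ m, u i ∈ Set.Ico (0 : ℝ) 1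

/-- The list of vertices of the polygon inscribed in the loop `γ` with parameters
`u 0, …, u m`. -/
def loopVertexList {E : Type*} (γ : AddCircle (1 : ℝ) → E) (m : ℕ) (u : ℕ → ℝ) : List E :=
  (List.range (m + 1)).map fun i => γ (u i : ℝ)

/-- The sum of the lengths of the successive edges of a list of points. -/
def lenList {E : Type*} [NormedAddCommGroup E] : List E → ℝ
  | a :: b :: l => ‖b - a‖ + lenList (b :: l)
  | _ => 0

/-- The length of the closed polygon inscribed in the loop `γ` with parameters
`u 0, …, u m`: the sum of the edge lengths, indices taken cyclically. -/
def loopPolyLen {E : Type*} [NormedAddCommGroup E]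
    (γ : AddCircle (1 : ℝ) → E) (m : ℕ) (u : ℕ → ℝ) : ℝ :=
  lenList (loopVertexList γ m u ++ (loopVertexList γ m u).take 1)

/-- The length of a loop `γ : ℝ/ℤ → E`: the supremum of the lengths of inscribed closed
polygons, valued in `[0,∞]`. -/
def loopLen {E : Type*} [NormedAddCommGroup E] (γ : AddCircle (1 : ℝ) → E) : ℝ≥0∞ :=
  ⨆ (m : ℕ) (u : ℕ → ℝ) (_ : LoopInscribed m u), ENNReal.ofReal (loopPolyLen γ m u)

open Classical in
/-- Collapse consecutive equal vertices of a *cyclic* list of vertices: collapse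
consecutive duplicates, also across the wrap-around. -/
def cyclicCollapse {E : Type*} (l : List E) : List E :=
  if 2 ≤ (collapse l).length ∧ (collapse l).getLast? = (collapse l).head? then
    (collapse l).dropLast
  else collapse l

/-- The total curvature of the closed polygon inscribed in the loop `γ` with parameters
`u 0, …, u m`: after cyclically collapsing consecutive equal vertices, the sum of the
turning angles at all of its vertices (every vertex of a closed polygon is interior). -/
def loopPolyTC {E : Type*} [NormedAddCommGroup E] [InnerProductSpace ℝ E]
    (γ : AddCircle (1 : ℝ) → E) (m : ℕ) (u : ℕ → ℝ) : ℝ :=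
  turnSum (cyclicCollapse (loopVertexList γ m u) ++
    (cyclicCollapse (loopVertexList γ m u)).take 2)

/-- The total curvature of a loop `γ : ℝ/ℤ → E`: the supremum over all inscribed closed
polygons of their total curvature, valued in `[0,∞]`. -/
def loopTC {E : Type*} [NormedAddCommGroup E] [InnerProductSpace ℝ E]
    (γ : AddCircle (1 : ℝ) → E) : ℝ≥0∞ :=
  ⨆ (m : ℕ) (u : ℕ → ℝ) (_ : LoopInscribed m u), ENNReal.ofReal (loopPolyTC γ m u)

/-- The euclidean total curvature `TC*` of the closed inscribed polygon. -/
def loopPolyTCStar {E : Type*} [NormedAddCommGroup E] [InnerProductSpace ℝ E]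
    (γ : AddCircle (1 : ℝ) → E) (m : ℕ) (u : ℕ → ℝ) : ℝ :=
  starSum (cyclicCollapse (loopVertexList γ m u) ++
    (cyclicCollapse (loopVertexList γ m u)).take 2)

/-- The euclidean total curvature `TC*` of a loop `γ : ℝ/ℤ → E`. -/
def loopTCStar {E : Type*} [NormedAddCommGroup E] [InnerProductSpace ℝ E]
    (γ : AddCircle (1 : ℝ) → E) : ℝ≥0∞ :=
  ⨆ (m : ℕ) (u : ℕ → ℝ) (_ : LoopInscribed m u), ENNReal.ofReal (loopPolyTCStar γ m u)

end

open InnerProductGeometry in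
/-- Cutting a polygon at an edge splits the sum of its turning angles. -/
theorem turnSum_split {E : Type*} [NormedAddCommGroup E] [InnerProductSpace ℝ E]
    (pre : List E) (x y : E) (post : List E) :
    turnSum (pre ++ x :: y :: post) = turnSum (pre ++ [x, y]) + turnSum (x :: y :: post) := by
  induction pre with
  | nil => simp [turnSum]
  | cons p pre ih =>
    rcases pre with _ | ⟨q, _ | ⟨r, pre⟩⟩
    · simp [turnSum]
    · simp only [List.cons_append, List.nil_append, turnSum] at ih ⊢
      linarith
    · simp only [List.cons_append, turnSum] at ih ⊢
      linarith

theorem collapse_of_isChain {E : Type*} (l : List E) (h : l.IsChain (· ≠ ·)) :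
    collapse l = l := by
  unfold collapse
  exact @List.destutter_of_isChain E _ (Classical.decRel _) l h

theorem collapse_dup {E : Type*} (pre : List E) (a : E) (post : List E)
    (h : (pre ++ a :: post).IsChain (· ≠ ·)) :
    collapse (pre ++ a :: a :: post) = pre ++ a :: post := by
  letI : DecidableRel (fun x y : E => x ≠ y) := Classical.decRel _
  have key : ∀ (pre : List E) (b : E), (b :: (pre ++ a :: post)).IsChain (· ≠ ·) →
      List.destutter' (· ≠ ·) b (pre ++ a :: a :: post) = b :: (pre ++ a :: post) := by
    intro pre
    induction pre with
    | nil =>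
      intro b hb
      simp only [List.nil_append, List.isChain_cons_cons] at hb ⊢
      rw [List.destutter'_cons_pos _ hb.1, List.destutter'_cons_neg _ (by simp),
        List.destutter'_of_isChain_cons _ _ hb.2]
    | cons p pre ih =>
      intro b hb
      simp only [List.cons_append, List.isChain_cons_cons] at hb ⊢
      rw [List.destutter'_cons_pos _ hb.1, ih p hb.2]
  change List.destutter (· ≠ ·) _ = _
  cases pre with
  | nil =>
    simp only [List.nil_append] at h ⊢
    rw [List.destutter_cons', List.destutter'_cons_neg _ (by simp),
      List.destutter'_of_isChain_cons _ _ h]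
  | cons p pre => exact key pre p h

open InnerProductGeometry in
theorem turnSum_delete_le {E : Type*} [NormedAddCommGroup E] [InnerProductSpace ℝ E]
    (pre : List E) (a b c : E) (post : List E) (hbc : b ≠ c) :
    turnSum (pre ++ a :: c :: post) ≤ turnSum (pre ++ a :: b :: c :: post) := by
  have h2 : c - b ≠ 0 := sub_ne_zero.2 hbc.symm
  have h := angle_eq_angle_add_add_angle_add (b - a) h2
  have e : b - a + (c - b) = c - a := by abel
  rw [e, angle_comm (c - b)] at h
  have t1 : ∀ x, angle (a - x) (c - a) ≤ angle (a - x) (b - a) + angle (b - a) (c - a) :=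
    fun x => angle_le_angle_add_angle _ _ _
  have t2 : ∀ y, angle (c - a) (y - c) ≤ angle (c - a) (c - b) + angle (c - b) (y - c) :=
    fun y => angle_le_angle_add_angle _ _ _
  have n1 := angle_nonneg (b - a) (c - a)
  have n2 := angle_nonneg (c - a) (c - b)
  rcases List.eq_nil_or_concat pre with rfl | ⟨pre, x, rfl⟩
  · rcases post with _ | ⟨y, post⟩
    · simp only [List.nil_append, turnSum]
      linarith
    · simp only [List.nil_append, turnSum]
      linarith [t2 y]
  · simp only [List.append_assoc, List.cons_append, List.nil_append, List.concat_eq_append]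
    rw [turnSum_split pre x a (c :: post), turnSum_split pre x a (b :: c :: post)]
    rcases post with _ | ⟨y, post⟩
    · simp only [turnSum]
      linarith [t1 x]
    · simp only [turnSum]
      linarith [t1 x, t2 y]

open InnerProductGeometry in
theorem turnSum_delete_dup_le {E : Type*} [NormedAddCommGroup E] [InnerProductSpace ℝ E]
    (pre : List E) (a b : E) (post : List E) :
    turnSum (pre ++ a :: post) ≤ turnSum (pre ++ a :: b :: a :: post) := by
  have t : ∀ x y, angle (a - x) (y - a) ≤
      angle (a - x) (b - a) + (angle (b - a) (a - b) + angle (a - b) (y - a)) := fun x y =>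
    (angle_le_angle_add_angle _ (b - a) _).trans
      (add_le_add_right (angle_le_angle_add_angle _ (a - b) _) _)
  have n0 := angle_nonneg (b - a) (a - b)
  have n1 := fun x => angle_nonneg (a - x) (b - a)
  have n2 := fun y => angle_nonneg (a - b) (y - a)
  rcases List.eq_nil_or_concat pre with rfl | ⟨pre, x, rfl⟩
  · rcases post with _ | ⟨y, post⟩
    · simp only [List.nil_append, turnSum]
      linarith
    · simp only [List.nil_append, turnSum]
      linarith [n2 y]
  · simp only [List.append_assoc, List.cons_append, List.nil_append, List.concat_eq_append]
    rw [turnSum_split pre x a post, turnSum_split pre x a (b :: a :: post)]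
    rcases post with _ | ⟨y, post⟩
    · simp only [turnSum]
      linarith [n1 x]
    · simp only [turnSum]
      linarith [t x y]

open InnerProductGeometry in
theorem turnSum_delete_eq {E : Type*} [NormedAddCommGroup E] [InnerProductSpace ℝ E]
    (pre : List E) (a b c : E) (post : List E) (hab : a ≠ b) (hbc : b ≠ c)
    (hs : b ∈ segment ℝ a c) :
    turnSum (pre ++ a :: c :: post) = turnSum (pre ++ a :: b :: c :: post) := by
  obtain ⟨s, t, hs0, ht0, hst, rfl⟩ := hs
  have hac : c - a ≠ 0 := by
    intro h
    obtain rfl : c = a := sub_eq_zero.1 h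
    apply hab
    rw [← add_smul, hst, one_smul]
  have hs1 : 0 < s := lt_of_le_of_ne hs0 (by
    rintro rfl
    apply hbc
    rw [zero_add] at hst
    simp [hst])
  have ht1 : 0 < t := lt_of_le_of_ne ht0 (by
    rintro rfl
    apply hab
    rw [add_zero] at hst
    simp [hst])
  obtain rfl : s = 1 - t := by linarith
  have e1 : (1 - t) • a + t • c - a = t • (c - a) := by module
  have e2 : c - ((1 - t) • a + t • c) = (1 - t) • (c - a) := by module
  have z : angle (c - a) (c - a) = 0 := angle_self hac
  rcases List.eq_nil_or_concat pre with rfl | ⟨pre, x, rfl⟩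
  · rcases post with _ | ⟨y, post⟩ <;>
    simp [turnSum, e1, e2, angle_smul_left_of_pos, angle_smul_right_of_pos, hs1, ht1, z]
  · simp only [List.append_assoc, List.cons_append, List.nil_append, List.concat_eq_append]
    rw [turnSum_split pre x a (c :: post), turnSum_split pre x a (_ :: c :: post)]
    rcases post with _ | ⟨y, post⟩ <;>
    simp only [turnSum, e1, e2, angle_smul_left_of_pos _ _ hs1, angle_smul_right_of_pos _ _ hs1,
      angle_smul_left_of_pos _ _ ht1, angle_smul_right_of_pos _ _ ht1, z] <;> ring

/-- deleting one interior vertex `v j` (`0 < j < n`) from a polygon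
`v 0, …, v n` in `ℝᵈ` with no two consecutive vertices equal does not increase the total
curvature; equality holds if `v (j-1), v j, v (j+1)` are collinear with `v j` on the
segment from `v (j-1)` to `v (j+1)`. -/
theorem tc_delete_vertex (d n j : ℕ) (hj0 : 0 < j) (hjn : j < n)
    (v : ℕ → EuclideanSpace ℝ (Fin d)) (hne : ∀ i < n, v i ≠ v (i + 1)) :
    turnSum (collapse ((List.range n).map fun i => if i < j then v i else v (i + 1))) ≤
      turnSum (collapse ((List.range (n + 1)).map v)) ∧
    (v j ∈ segment ℝ (v (j - 1)) (v (j + 1)) →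
      turnSum (collapse ((List.range n).map fun i => if i < j then v i else v (i + 1))) =
        turnSum (collapse ((List.range (n + 1)).map v))) := by
  obtain ⟨k, rfl⟩ : ∃ k, j = k + 1 := ⟨j - 1, by omega⟩
  obtain ⟨m, rfl⟩ : ∃ m, n = k + (2 + m) := ⟨n - k - 2, by omega⟩
  have hP : (List.range (k + (2 + m) + 1)).map v = (List.range k).map v ++
      v k :: v (k + 1) :: v (k + 2) :: (List.range m).map (fun i => v (k + 3 + i)) := by
    rw [show k + (2 + m) + 1 = k + (3 + m) by ring, List.range_add, List.range_add (n := 3)]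
    simp [List.range_succ, Function.comp_def, add_assoc]
  have hP' : ((List.range (k + (2 + m))).map fun i => if i < k + 1 then v i else v (i + 1)) =
      (List.range k).map v ++
      v k :: v (k + 2) :: (List.range m).map (fun i => v (k + 3 + i)) := by
    rw [List.range_add, List.range_add (n := 2), List.map_append]
    congr 1
    · apply List.map_congr_left
      intro i hi
      have := List.mem_range.1 hi
      rw [if_pos (by omega)]
    · simp only [List.map_append, List.map_map, List.range_succ, List.range_zero, List.nil_append,
        List.map_cons, List.map_nil, List.cons_append, Function.comp_def]
      rw [if_pos (by omega), if_neg (by omega)]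
      congr 2
      apply List.map_congr_left
      intro i hi
      rw [if_neg (by omega)]
      congr 1
      ring
  have hc : ((List.range (k + (2 + m) + 1)).map v).IsChain (· ≠ ·) := by
    rw [List.isChain_map, List.isChain_range_succ]
    exact hne
  have hkb : v k ≠ v (k + 1) := hne k (by omega)
  have hbc : v (k + 1) ≠ v (k + 2) := hne (k + 1) (by omega)
  rw [collapse_of_isChain _ hc, hP, hP']
  rw [hP] at hc
  simp only [Nat.add_sub_cancel, show k + 1 + 1 = k + 2 from rfl]
  have hc1 := (List.isChain_split.1 hc)
  have hc2 := hc1.2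
  simp only [List.isChain_cons_cons] at hc2
  by_cases hac : v k = v (k + 2)
  · rw [← hac] at hc2 ⊢
    rw [collapse_dup _ _ _ (List.isChain_split.2 ⟨hc1.1, hc2.2.2⟩)]
    refine ⟨turnSum_delete_dup_le _ _ _ _, fun hs => ?_⟩
    rw [segment_same] at hs
    exact absurd hs.symm hkb
  · rw [collapse_of_isChain _ (List.isChain_split.2 ⟨hc1.1,
      List.isChain_cons_cons.2 ⟨hac, hc2.2.2⟩⟩)]
    exact ⟨turnSum_delete_le _ _ _ _ _ hbc, turnSum_delete_eq _ _ _ _ _ hkb hbc⟩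
end

section
/- Let P be a polygonal curve in ℝ^d and let P' be a polygon inscribed in P, i.e. P' is an inscribed polygon of P viewed as a continuous curve (its vertices lie on P in order along P). Then TC(P') ≤ TC(P). -/
open Set Filter MeasureTheory
open scoped ENNReal NNReal RealInnerProductSpace

/-- The piecewise-linear curve through the vertices `v 0, v 1, …`: for `t ∈ [i, i+1]` it
interpolates linearly from `v i` to `v (i+1)`. -/
noncomputable def plCurve {E : Type*} [NormedAddCommGroup E] [Module ℝ E]
    (v : ℕ → E) : ℝ → E := fun t =>
  (1 - (t - (⌊t⌋₊ : ℝ))) • v ⌊t⌋₊ + (t - (⌊t⌋₊ : ℝ)) • v (⌊t⌋₊ + 1)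

open InnerProductGeometry

section Aux

variable {E : Type*} [NormedAddCommGroup E] [InnerProductSpace ℝ E]

open Classical in
/-- Angle, with the convention that the zero vector means that there is no incoming direction. -/
noncomputable def ang (e x : E) : ℝ := if e = 0 then 0 else angle e x

open Classical in
/-- Total turning when arriving at `p` with direction `e` and going on through the list. -/
noncomputable def turnFrom : E → E → List E → ℝ
  | _, _, [] => 0
  | e, p, q :: l => if q = p then turnFrom e p l else ang e (q - p) + turnFrom (q - p) q l

theorem sub_ne_zero_aux {q p : E} (h : ¬ q = p) : q - p ≠ 0 := sub_ne_zero.mpr h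

theorem ang_nonneg (e x : E) : 0 ≤ ang e x := by
  unfold ang; split_ifs
  · exact le_rfl
  · exact angle_nonneg _ _

theorem ang_le_pi (e x : E) : ang e x ≤ Real.pi := by
  unfold ang; split_ifs
  · exact Real.pi_pos.le
  · exact angle_le_pi _ _

theorem ang_zero (x : E) : ang 0 x = 0 := by simp [ang]

theorem ang_of_ne {e : E} (h : e ≠ 0) (x : E) : ang e x = angle e x := by simp [ang, h]

theorem ang_triangle (e x y : E) : ang e y ≤ ang e x + angle x y := by
  unfold ang; split_ifs
  · simpa using angle_nonneg x y
  · exact angle_le_angle_add_angle _ _ _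

theorem turnFrom_nonneg (l : List E) : ∀ e p : E, 0 ≤ turnFrom e p l := by
  induction l with
  | nil => intro e p; simp [turnFrom]
  | cons q l ih =>
    intro e p
    rw [turnFrom]
    split_ifs
    · exact ih _ _
    · exact add_nonneg (ang_nonneg _ _) (ih _ _)

theorem turnFrom_change (l : List E) : ∀ (e e' p : E), e' ≠ 0 →
    turnFrom e p l ≤ ang e e' + turnFrom e' p l := by
  induction l with
  | nil => intro e e' p _; simpa [turnFrom] using ang_nonneg e e'
  | cons q l ih =>
    intro e e' p he
    rw [turnFrom, turnFrom]
    split_ifs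
    · exact ih _ _ _ he
    · have := ang_triangle e e' (q - p)
      rw [ang_of_ne he]
      linarith

theorem turnFrom_smul (l : List E) : ∀ (e p : E) (s : ℝ), 0 < s →
    turnFrom (s • e) p l = turnFrom e p l := by
  induction l with
  | nil => intro e p s _; simp [turnFrom]
  | cons q l ih =>
    intro e p s hs
    rw [turnFrom, turnFrom, ih _ _ _ hs]
    have : ang (s • e) (q - p) = ang e (q - p) := by
      by_cases he : e = 0
      · simp [he]
      · rw [ang_of_ne he, ang_of_ne (smul_ne_zero hs.ne' he), angle_smul_left_of_pos _ _ hs]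
    rw [this]

/-- Deleting the next vertex does not increase the turning. -/
theorem turnFrom_delete (e p q : E) (l : List E) :
    turnFrom e p l ≤ turnFrom e p (q :: l) := by
  by_cases hqp : q = p
  · simp [turnFrom, hqp]
  cases l with
  | nil => exact turnFrom_nonneg _ _ _
  | cons r l =>
    by_cases hrp : r = p
    · subst hrp
      have hrq : ¬ r = q := fun h => hqp h.symm
      have h1 := turnFrom_change l e (r - q) r (sub_ne_zero_aux hrq)
      have h2 := ang_le_pi e (r - q)
      have h3 : ang (q - r) (r - q) = Real.pi := by
        rw [ang_of_ne (sub_ne_zero_aux hqp), ← neg_sub q r]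
        exact angle_self_neg_of_nonzero (sub_ne_zero_aux hqp)
      have h4 := ang_nonneg e (q - r)
      simp only [turnFrom, hqp, hrq, if_true, if_false]
      linarith
    by_cases hrq : r = q
    · subst hrq
      simp [turnFrom, hqp]
    simp only [turnFrom, hqp, hrq, hrp, if_false]
    have h1 := turnFrom_change l (r - p) (r - q) r (sub_ne_zero_aux hrq)
    have h2 := ang_triangle e (q - p) (r - p)
    have h3 := angle_eq_angle_add_add_angle_add (q - p) (sub_ne_zero_aux hrq)
    rw [sub_add_sub_cancel'] at h3
    rw [ang_of_ne (sub_ne_zero_aux hrp)] at h1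
    rw [ang_of_ne (sub_ne_zero_aux hqp), h3, angle_comm (r - q)]
    linarith

theorem turnFrom_sublist {l' l : List E} (h : l'.Sublist l) :
    ∀ e p : E, turnFrom e p l' ≤ turnFrom e p l := by
  induction h with
  | slnil => intro e p; exact le_rfl
  | cons a _ ih => intro e p; exact (ih e p).trans (turnFrom_delete e p a _)
  | cons_cons a _ ih =>
    intro e p
    rw [turnFrom, turnFrom]
    split_ifs
    · exact ih _ _
    · linarith [ih (a - p) a]

/-- Total turning of a vertex list. -/
noncomputable def turnList : List E → ℝ
  | [] => 0
  | a :: l => turnFrom 0 a l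

theorem turnList_cons (a : E) (l : List E) : turnList l ≤ turnList (a :: l) := by
  cases l with
  | nil => exact turnFrom_nonneg _ _ _
  | cons b l =>
    simp only [turnList, turnFrom]
    split_ifs with h
    · rw [h]
    · have := turnFrom_change l 0 (b - a) b (sub_ne_zero_aux h)
      rw [ang_zero] at *
      exact this

theorem turnList_sublist {l' l : List E} (h : l'.Sublist l) : turnList l' ≤ turnList l := by
  induction h with
  | slnil => exact le_rfl
  | cons a _ ih => exact ih.trans (turnList_cons a _)
  | cons_cons a h _ => exact turnFrom_sublist h _ _

theorem turnSum_destutter (l : List E) : ∀ a : E, ∃ t : List E,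
    @List.destutter' E (· ≠ ·) (Classical.decRel _) a l = a :: t ∧
    turnSum (a :: t) = turnFrom 0 a l ∧
    ∀ z : E, z ≠ a → turnSum (z :: a :: t) = turnFrom (a - z) a l := by
  classical
  induction l with
  | nil => intro a; exact ⟨[], by simp [turnSum, turnFrom]⟩
  | cons b l ih =>
    intro a
    by_cases h : a = b
    · subst h
      obtain ⟨t, h1, h2, h3⟩ := ih a
      refine ⟨t, ?_, ?_, ?_⟩
      · rw [@List.destutter'_cons_neg E l (· ≠ ·) (Classical.decRel _) a a (by simp)]; exact h1
      · rw [h2]; simp [turnFrom]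
      · intro z hz; rw [h3 z hz]; simp [turnFrom]
    · obtain ⟨t, h1, h2, h3⟩ := ih b
      have hb : ¬ b = a := fun hh => h hh.symm
      refine ⟨b :: t, ?_, ?_, ?_⟩
      · rw [@List.destutter'_cons_pos E l (· ≠ ·) (Classical.decRel _) b a h, h1]
      · rw [h3 a h]; simp [turnFrom, hb, ang_zero]
      · intro z hz
        rw [turnSum, h3 a h]
        have hz' : ¬ a = z := fun hh => hz hh.symm
        rw [turnFrom, if_neg hb, ang_of_ne (sub_ne_zero_aux hz')]

theorem turnSum_collapse (l : List E) : turnSum (collapse l) = turnList l := by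
  cases l with
  | nil => simp [collapse, turnSum, turnList]
  | cons a l =>
    obtain ⟨t, h1, h2, _⟩ := turnSum_destutter l a
    rw [collapse, List.destutter, h1, h2, turnList]

/-- Inserting a point of a segment does not increase the turning. -/
theorem turnFrom_insert (e p q r : E) (l : List E) (s : ℝ) (hs0 : 0 ≤ s) (hs1 : s ≤ 1)
    (hq : q - p = s • (r - p)) : turnFrom e p (q :: r :: l) ≤ turnFrom e p (r :: l) := by
  by_cases hqp : q = p
  · simp [turnFrom, hqp]
  have hrp : ¬ r = p := by
    rintro rfl
    apply hqp; simpa [sub_eq_zero] using hq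
  have hs : 0 < s := by
    rcases hs0.eq_or_lt with h | h
    · subst h; exact absurd (by simpa [sub_eq_zero] using hq) hqp
    · exact h
  by_cases hrq : r = q
  · subst hrq; simp [turnFrom, hqp]
  have hrq' : r - q = (1 - s) • (r - p) := by
    rw [sub_smul, one_smul, ← hq]; abel
  have hs' : 0 < 1 - s := by
    rcases (sub_nonneg.mpr hs1).eq_or_lt with h | h
    · rw [← h, zero_smul, sub_eq_zero] at hrq'; exact absurd hrq' hrq
    · exact h
  simp only [turnFrom, hqp, hrq, hrp, if_false]
  rw [ang_of_ne (sub_ne_zero_aux hqp), hq, hrq', turnFrom_smul _ _ _ _ hs',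
    angle_smul_left_of_pos _ _ hs, angle_smul_right_of_pos _ _ hs',
    angle_self (sub_ne_zero_aux hrp), zero_add]
  have : ang e (s • (r - p)) = ang e (r - p) := by
    simp [ang, angle_smul_right_of_pos _ _ hs]
  rw [this]

theorem plCurve_eq (v : ℕ → E) (k : ℕ) (x : ℝ) (h0 : (k : ℝ) ≤ x) (h1 : x ≤ k + 1) :
    plCurve v x = v k + (x - k) • (v (k + 1) - v k) := by
  rcases h1.eq_or_lt with h | h
  · have hx : x = ((k + 1 : ℕ) : ℝ) := by rw [h]; push_cast; rfl
    unfold plCurve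
    rw [hx, Nat.floor_natCast]
    simp
  · have hf : ⌊x⌋₊ = k := (Nat.floor_eq_iff ((Nat.cast_nonneg k).trans h0)).mpr ⟨h0, h⟩
    unfold plCurve
    rw [hf]
    module

/-- Two ordered parameters on the same edge. -/
def SameEdge (x y : ℝ) : Prop := ∃ k : ℕ, (k : ℝ) ≤ x ∧ x ≤ y ∧ y ≤ k + 1

theorem turnFrom_orderedInsert (v : ℕ → E) (t : ℝ) (S : List ℝ) : ∀ (e : E) (p : ℝ), p ≤ t →
    (p :: S).IsChain SameEdge → (∃ b ∈ S, t ≤ b) →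
    turnFrom e (plCurve v p) ((S.orderedInsert (· ≤ ·) t).map (plCurve v)) ≤
        turnFrom e (plCurve v p) (S.map (plCurve v)) ∧
      (p :: S.orderedInsert (· ≤ ·) t).IsChain SameEdge := by
  induction S with
  | nil => intro e p _ _ h; simp at h
  | cons r S ih =>
    intro e p hp hc hb
    rw [List.isChain_cons_cons] at hc
    obtain ⟨hpr, hc⟩ := hc
    rw [List.orderedInsert_cons]
    split_ifs with htr
    · obtain ⟨k, hk0, hk1, hk2⟩ := hpr
      refine ⟨?_, ?_⟩
      · simp only [List.map_cons]
        apply turnFrom_insert _ _ _ _ _ ((t - p) / (r - p))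
        · exact div_nonneg (by linarith) (by linarith)
        · exact div_le_one_of_le₀ (by linarith) (by linarith)
        · rw [plCurve_eq v k p hk0 (by linarith), plCurve_eq v k t (by linarith) (by linarith),
            plCurve_eq v k r (by linarith) hk2]
          rw [add_sub_add_left_eq_sub, add_sub_add_left_eq_sub, ← sub_smul, ← sub_smul, smul_smul]
          congr 1
          by_cases h : r - p = 0
          · have : t = p := by linarith
            simp [this]
          · field_simp
            ring
      · rw [List.isChain_cons_cons, List.isChain_cons_cons]
        exact ⟨⟨k, hk0, hp, by linarith⟩, ⟨k, by linarith, htr, hk2⟩, hc⟩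
    · have hb' : ∃ b ∈ S, t ≤ b := by
        obtain ⟨b, hb, htb⟩ := hb
        rcases List.mem_cons.mp hb with rfl | hb
        · exact absurd htb htr
        · exact ⟨b, hb, htb⟩
      have key := fun e' => ih e' r (le_of_not_ge htr) hc hb'
      refine ⟨?_, ?_⟩
      · simp only [List.map_cons, turnFrom]
        split_ifs with hh
        · have := (key e).1
          rwa [hh] at this
        · linarith [(key (plCurve v r - plCurve v p)).1]
      · rw [List.isChain_cons_cons]
        exact ⟨hpr, (key 0).2⟩

theorem exists_refinement (v : ℕ → E) (n : ℕ) (B : List ℝ) (hB : (0 :: B).IsChain SameEdge)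
    (hn : (n : ℝ) ∈ B) (L : List ℝ) (hL : L.Pairwise (· ≤ ·)) (hLI : ∀ x ∈ L, x ∈ Set.Icc 0 (n : ℝ)) :
    ∃ S : List ℝ, L.Sublist S ∧ (0 :: S).IsChain SameEdge ∧ (n : ℝ) ∈ S ∧
      turnFrom 0 (plCurve v 0) (S.map (plCurve v)) ≤
        turnFrom 0 (plCurve v 0) (B.map (plCurve v)) := by
  induction L with
  | nil => exact ⟨B, List.nil_sublist _, hB, hn, le_rfl⟩
  | cons t L ih =>
    rw [List.pairwise_cons] at hL
    obtain ⟨S, h1, h2, h3, h4⟩ := ih hL.2 (fun x hx => hLI x (List.mem_cons_of_mem _ hx))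
    have ht := hLI t List.mem_cons_self
    have key := turnFrom_orderedInsert v t S 0 0 ht.1 h2 ⟨n, h3, ht.2⟩
    refine ⟨S.orderedInsert (· ≤ ·) t, ?_, key.2, ?_, key.1.trans h4⟩
    · exact List.cons_sublist_orderedInsert h1 hL.1
    · rw [List.mem_orderedInsert]; exact Or.inr h3

theorem plCurve_natCast (v : ℕ → E) (k : ℕ) : plCurve v (k : ℝ) = v k := by
  simp [plCurve]

end Aux

/-- if `P'` is a polygon inscribed in a polygonal curve `P` (its vertices
lie on `P`, in order along `P`), then `TC(P') ≤ TC(P)`. -/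
theorem tc_inscribed_polygon_le (d n : ℕ) (v : ℕ → EuclideanSpace ℝ (Fin d))
    (m : ℕ) (u : ℕ → ℝ) (h : InscribedIn 0 n m u) :
    polyTC (plCurve v) m u ≤ turnSum (collapse ((List.range (n + 1)).map v)) := by
  rw [polyTC, turnSum_collapse, turnSum_collapse]
  obtain ⟨hlt, hmem⟩ := h
  have hmono : ∀ j ≤ m, ∀ i ≤ j, u i ≤ u j := by
    intro j
    induction j with
    | zero => intro _ i hi; rw [Nat.le_zero.mp hi]
    | succ j ih =>
      intro hj i hi
      rcases Nat.le_succ_iff.mp hi with hi | rfl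
      · exact (ih (by omega) i hi).trans (hlt j (by omega)).le
      · exact le_rfl
  have hL : ((List.range (m + 1)).map u).Pairwise (· ≤ ·) := by
    rw [List.pairwise_map]
    refine List.Pairwise.imp_of_mem ?_ List.pairwise_lt_range
    intro a b _ hb hab
    exact hmono b (by simpa [Nat.lt_succ_iff] using hb) a hab.le
  have hB : (0 :: (List.range (n + 1)).map (fun i : ℕ => (i : ℝ))).IsChain SameEdge := by
    rw [List.range_succ_eq_map, List.map_cons, List.isChain_cons_cons, Nat.cast_zero]
    refine ⟨⟨0, by simp⟩, ?_⟩
    have : ((List.range (n + 1)).map (fun i : ℕ => (i : ℝ))).IsChain SameEdge := by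
      rw [List.isChain_map, List.isChain_range]
      intro k hk
      exact ⟨k, le_rfl, by simp, by simp⟩
    rwa [List.range_succ_eq_map, List.map_cons, Nat.cast_zero] at this
  obtain ⟨S, h1, _, _, h4⟩ := exists_refinement v n _ hB
    (List.mem_map.mpr ⟨n, by simp, rfl⟩) _ hL (by
      intro x hx
      obtain ⟨i, hi, rfl⟩ := List.mem_map.mp hx
      exact hmem i (by simpa [Nat.lt_succ_iff] using hi))
  have e1 : vertexList (plCurve v) m u = ((List.range (m + 1)).map u).map (plCurve v) := by
    simp [vertexList]
  have e2 : ((List.range (n + 1)).map (fun i : ℕ => (i : ℝ))).map (plCurve v) =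
      (List.range (n + 1)).map v := by
    rw [List.map_map]
    exact List.map_congr_left (fun k _ => plCurve_natCast v k)
  have e3 : plCurve v 0 = v 0 := by simpa using plCurve_natCast v 0
  rw [e2, e3] at h4
  rw [e1]
  refine (turnList_sublist (h1.map _)).trans ((turnList_cons (v 0) _).trans (h4.trans ?_))
  rw [List.range_succ_eq_map, List.map_cons, turnList, turnFrom, if_pos rfl]
end

section
/- (Fenchel's theorem) Every nonconstant closed curve γ : ℝ/ℤ → ℝ^d has total curvature TC(γ) ≥ 2π. -/
open Set Filter MeasureTheory
open scoped ENNReal NNReal RealInnerProductSpace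

theorem digon_le {E : Type*} [NormedAddCommGroup E] [InnerProductSpace ℝ E]
    (γ : AddCircle (1 : ℝ) → E) (x y : ℝ) (hx : x ∈ Set.Ico (0 : ℝ) 1)
    (hy : y ∈ Set.Ico (0 : ℝ) 1) (hxy : x < y)
    (hne : γ (x : AddCircle (1 : ℝ)) ≠ γ (y : AddCircle (1 : ℝ))) :
    ENNReal.ofReal (2 * Real.pi) ≤ loopTC γ := by
  let u : ℕ → ℝ := fun i => if i = 0 then x else y
  have hu : LoopInscribed 1 u := by
    refine ⟨fun i hi => ?_, fun i _ => ?_⟩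
    · obtain rfl : i = 0 := by omega
      simpa [u] using hxy
    · by_cases h : i = 0
      · simpa [u, h] using hx
      · simpa [u, h] using hy
  have hv : loopVertexList γ 1 u = [γ (x : AddCircle (1 : ℝ)), γ (y : AddCircle (1 : ℝ))] := by
    simp [loopVertexList, List.range_succ, u]
  have hc : cyclicCollapse (loopVertexList γ 1 u)
      = [γ (x : AddCircle (1 : ℝ)), γ (y : AddCircle (1 : ℝ))] := by
    rw [hv]
    have h : collapse [γ (x : AddCircle (1 : ℝ)), γ (y : AddCircle (1 : ℝ))]
        = [γ (x : AddCircle (1 : ℝ)), γ (y : AddCircle (1 : ℝ))] := by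
      unfold collapse
      simp [List.destutter, List.destutter', hne]
    rw [cyclicCollapse, h]
    simp [hne.symm]
  have hang : ∀ a b : E, a ≠ b → InnerProductGeometry.angle (b - a) (a - b) = Real.pi := by
    intro a b hab
    rw [← neg_sub b a]
    exact InnerProductGeometry.angle_self_neg_of_nonzero (sub_ne_zero.2 hab.symm)
  have hT : loopPolyTC γ 1 u = 2 * Real.pi := by
    rw [loopPolyTC, hc]
    simp [turnSum, hang _ _ hne, hang _ _ hne.symm]
    ring
  rw [← hT]
  exact le_iSup_of_le 1 (le_iSup_of_le u (le_iSup_of_le hu le_rfl))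

/-- Fenchel's theorem: every nonconstant closed curve `γ : ℝ/ℤ → ℝᵈ` has
total curvature at least `2π`. -/
theorem fenchel (d : ℕ) (γ : AddCircle (1 : ℝ) → EuclideanSpace ℝ (Fin d))
    (hγ : Continuous γ) (hnc : ∃ s t, γ s ≠ γ t) :
    ENNReal.ofReal (2 * Real.pi) ≤ loopTC γ := by
  obtain ⟨s, t, hst⟩ := hnc
  obtain ⟨x, hx, rfl⟩ : ∃ x ∈ Set.Ico (0 : ℝ) 1, (x : AddCircle (1 : ℝ)) = s := by
    have := (AddCircle.coe_image_Ico_eq (1 : ℝ) 0).ge (Set.mem_univ s)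
    simpa using this
  obtain ⟨y, hy, rfl⟩ : ∃ x ∈ Set.Ico (0 : ℝ) 1, (x : AddCircle (1 : ℝ)) = t := by
    have := (AddCircle.coe_image_Ico_eq (1 : ℝ) 0).ge (Set.mem_univ t)
    simpa using this
  rcases lt_trichotomy x y with h | h | h
  · exact digon_le γ x y hx hy h hst
  · exact absurd (by rw [h]) hst
  · exact digon_le γ y x hy hx h hst.symm
end

section
/- (Milnor's lemma) If K : ℝ/ℤ → ℝ³ is a knotted closed curve, then for every unit vector v ∈ ℝ³, the projection of K to the line in direction v, i.e. the closed curve t ↦ ⟨K(t), v⟩ in ℝ = ℝ¹, has total curvature at least 4π. -/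
open Set Filter MeasureTheory
open scoped ENNReal NNReal RealInnerProductSpace

/-- `K : ℝ/ℤ → ℝ³` is unknotted if there is an ambient isotopy `H : [0,1] × ℝ³ → ℝ³`
with `H 0 = id`, each `H t` a homeomorphism of `ℝ³`, and `H 1` carrying the image of `K`
onto the round unit circle in the `xy`-plane. -/
def Unknotted (K : AddCircle (1 : ℝ) → EuclideanSpace ℝ (Fin 3)) : Prop :=
  ∃ H : ℝ × EuclideanSpace ℝ (Fin 3) → EuclideanSpace ℝ (Fin 3),
    ContinuousOn H (Set.Icc (0 : ℝ) 1 ×ˢ Set.univ) ∧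
    (∀ x, H (0, x) = x) ∧
    (∀ t ∈ Set.Icc (0 : ℝ) 1, IsHomeomorph fun x => H (t, x)) ∧
    (fun x => H (1, x)) '' Set.range K =
      {p : EuclideanSpace ℝ (Fin 3) | p 0 ^ 2 + p 1 ^ 2 = 1 ∧ p 2 = 0}


/-! ### Ambient isotopies of sets -/

/-- Two subsets of a space are ambient isotopic. -/
def AmbIso {X : Type*} [TopologicalSpace X] (A B : Set X) : Prop :=
  ∃ H : ℝ × X → X, ContinuousOn H (Set.Icc (0 : ℝ) 1 ×ˢ Set.univ) ∧
    (∀ x, H (0, x) = x) ∧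
    (∀ t ∈ Set.Icc (0 : ℝ) 1, IsHomeomorph fun x => H (t, x)) ∧
    (fun x => H (1, x)) '' A = B

theorem AmbIso.trans {X : Type*} [TopologicalSpace X] {A B C : Set X}
    (h₁ : AmbIso A B) (h₂ : AmbIso B C) : AmbIso A C := by
  obtain ⟨H, hc, h0, hh, hi⟩ := h₁
  obtain ⟨G, gc, g0, gh, gi⟩ := h₂
  refine ⟨fun p => G (p.1, H p), ?_, ?_, ?_, ?_⟩
  · refine gc.comp (continuousOn_fst.prodMk hc) ?_
    intro p hp
    exact ⟨hp.1, mem_univ _⟩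
  · intro x
    simp [h0, g0]
  · intro t ht
    exact (gh t ht).comp (hh t ht)
  · rw [← gi, ← hi, image_image]

theorem AmbIso.transport {X Y : Type*} [TopologicalSpace X] [TopologicalSpace Y] (e : X ≃ₜ Y)
    {A B : Set X} (h : AmbIso (e '' A) (e '' B)) : AmbIso A B := by
  obtain ⟨H, hc, h0, hh, hi⟩ := h
  refine ⟨fun p => e.symm (H (p.1, e p.2)), ?_, ?_, ?_, ?_⟩
  · refine e.symm.continuous.comp_continuousOn (hc.comp ?_ ?_)
    · exact (continuous_fst.prodMk (e.continuous.comp continuous_snd)).continuousOn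
    · intro p hp
      exact ⟨hp.1, mem_univ _⟩
  · intro x
    simp [h0]
  · intro t ht
    exact e.symm.isHomeomorph.comp ((hh t ht).comp e.isHomeomorph)
  · have : e.symm '' ((fun x => H (1, x)) '' (e '' A)) = e.symm '' (e '' B) := by rw [hi]
    simpa [image_image] using this

/-- A fibrewise strictly increasing proper continuous map is a homeomorphism. -/
theorem fiber_isHomeomorph {X : Type*} [TopologicalSpace X] (g : X × ℝ → ℝ) (hg : Continuous g)
    (hm : ∀ x, StrictMono fun y => g (x, y)) (ht : ∀ x, Tendsto (fun y => g (x, y)) atTop atTop)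
    (hb : ∀ x, Tendsto (fun y => g (x, y)) atBot atBot) :
    IsHomeomorph fun p : X × ℝ => (p.1, g p) := by
  have hsurj : ∀ x, Function.Surjective fun y => g (x, y) := fun x =>
    (hg.comp (by fun_prop : Continuous fun y : ℝ => (x, y))).surjective (ht x) (hb x)
  choose k hk using hsurj
  have hk' : ∀ x y, k x (g (x, y)) = y := fun x y => (hm x).injective (hk x (g (x, y)))
  have hkc : Continuous fun p : X × ℝ => k p.1 p.2 := by
    rw [continuous_iff_continuousAt]
    rintro ⟨x, y⟩
    rw [ContinuousAt, (nhds_basis_Ioo (k x y)).tendsto_right_iff]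
    rintro ⟨a, b⟩ ⟨ha, hb⟩
    have h1 : g (x, a) < y := by
      rw [← hk x y]; exact hm x ha
    have h2 : y < g (x, b) := by
      conv_lhs => rw [← hk x y]
      exact hm x hb
    have o1 : IsOpen {p : X × ℝ | g (p.1, a) < p.2} :=
      isOpen_lt (hg.comp (by fun_prop)) continuous_snd
    have o2 : IsOpen {p : X × ℝ | p.2 < g (p.1, b)} :=
      isOpen_lt continuous_snd (hg.comp (by fun_prop))
    filter_upwards [o1.mem_nhds h1, o2.mem_nhds h2] with p hp1 hp2
    refine ⟨(hm p.1).lt_iff_lt.1 ?_, (hm p.1).lt_iff_lt.1 ?_⟩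
    · rw [show g (p.1, k p.1 p.2) = p.2 from hk _ _]; exact hp1
    · rw [show g (p.1, k p.1 p.2) = p.2 from hk _ _]; exact hp2
  let e : X × ℝ ≃ₜ X × ℝ :=
    { toFun := fun p => (p.1, g p)
      invFun := fun p => (p.1, k p.1 p.2)
      left_inv := fun p => by simp [hk']
      right_inv := fun p => Prod.ext rfl (hk p.1 p.2)
      continuous_toFun := continuous_fst.prodMk hg
      continuous_invFun := continuous_fst.prodMk hkc }
  exact e.isHomeomorph

theorem AmbIso.fiber {X : Type*} [TopologicalSpace X] (g : X × ℝ → ℝ) (hg : Continuous g)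
    (hm : ∀ x, StrictMono fun y => g (x, y)) (ht : ∀ x, Tendsto (fun y => g (x, y)) atTop atTop)
    (hb : ∀ x, Tendsto (fun y => g (x, y)) atBot atBot) (A : Set (X × ℝ)) :
    AmbIso A ((fun p : X × ℝ => (p.1, g p)) '' A) := by
  refine ⟨fun q => (q.2.1, (1 - q.1) * q.2.2 + q.1 * g q.2), ?_, ?_, ?_, ?_⟩
  · exact Continuous.continuousOn (by fun_prop)
  · intro x; simp
  · rintro t ⟨t0, t1⟩
    refine fiber_isHomeomorph (fun p => (1 - t) * p.2 + t * g p) (by fun_prop) ?_ ?_ ?_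
    · intro x y y' hy
      have := hm x hy
      simp only at this ⊢
      rcases t0.eq_or_lt with rfl | t0
      · simpa using hy
      · have h1 : (1 - t) * y ≤ (1 - t) * y' := mul_le_mul_of_nonneg_left hy.le (by linarith)
        have h2 : t * g (x, y) < t * g (x, y') := mul_lt_mul_of_pos_left this t0
        linarith
    · intro x
      refine tendsto_atTop.2 fun c => ?_
      filter_upwards [(ht x).eventually_ge_atTop c, eventually_ge_atTop c] with y h1 h2
      nlinarith
    · intro x
      refine tendsto_atBot.2 fun c => ?_
      filter_upwards [(hb x).eventually_le_atBot c, eventually_le_atBot c] with y h1 h2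
      nlinarith
  · simp

/-- Fibrewise translation. -/
theorem AmbIso.translate {V Y : Type*} [NormedAddCommGroup V] [NormedSpace ℝ V]
    [TopologicalSpace Y] (a : Y → V) (ha : Continuous a) (A : Set (V × Y)) :
    AmbIso A ((fun p : V × Y => (p.1 + a p.2, p.2)) '' A) := by
  refine ⟨fun q => (q.2.1 + q.1 • a q.2.2, q.2.2), ?_, ?_, ?_, ?_⟩
  · exact Continuous.continuousOn (by fun_prop)
  · intro x; simp
  · rintro t -
    let e : V × Y ≃ₜ V × Y :=
      { toFun := fun p => (p.1 + t • a p.2, p.2)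
        invFun := fun p => (p.1 - t • a p.2, p.2)
        left_inv := fun p => by simp
        right_inv := fun p => by simp
        continuous_toFun := by fun_prop
        continuous_invFun := by fun_prop }
    exact e.isHomeomorph
  · simp

/-! ### Monotone extension -/

theorem exists_modulus {S : Type*} [TopologicalSpace S] [CompactSpace S] [Nonempty S]
    (a b : S → ℝ) (ha : Continuous a) (hb : Continuous b) (hb0 : ∀ s, 0 ≤ b s)
    (hab : ∀ s, b s = 0 → a s ≤ 0) :
    ∃ ω : ℝ → ℝ, Continuous ω ∧ Monotone ω ∧ ω 0 = 0 ∧ ∀ s, a s ≤ ω (b s) := by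
  let c : ℝ → S → ℝ := fun δ s => max (a s) 0 * max 0 (min 1 (δ / b s))
  have hcle : ∀ δ s, |c δ s| ≤ max (a s) 0 := by
    intro δ s
    have h1 : 0 ≤ max (a s) 0 := le_max_right _ _
    have h2 : 0 ≤ max 0 (min 1 (δ / b s)) := le_max_left _ _
    have h3 : max 0 (min 1 (δ / b s)) ≤ 1 := max_le zero_le_one (min_le_left _ _)
    rw [abs_of_nonneg (mul_nonneg h1 h2)]
    exact mul_le_of_le_one_right h1 h3
  have hc : Continuous ↿c := by
    rw [continuous_iff_continuousAt]
    rintro ⟨δ, s⟩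
    by_cases h : b s = 0
    · have h0 : max (a s) 0 = 0 := max_eq_right (hab s h)
      have hcs : c δ s = 0 := by simp [c, h0]
      have : Tendsto (fun p : ℝ × S => max (a p.2) 0) (nhds (δ, s)) (nhds 0) := by
        have := ((ha.comp continuous_snd).max continuous_const).tendsto (x := (δ, s))
          (f := fun p : ℝ × S => max (a p.2) 0)
        simpa [h0] using this
      rw [ContinuousAt]
      change Tendsto _ _ (nhds (c δ s))
      rw [hcs]
      exact squeeze_zero_norm (fun p => hcle p.1 p.2) this
    · have : ContinuousAt (fun p : ℝ × S => p.1 / b p.2) (δ, s) :=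
        continuousAt_fst.div (hb.comp continuous_snd).continuousAt h
      have h2 : ContinuousAt (fun p : ℝ × S => max (a p.2) 0) (δ, s) :=
        ((ha.comp continuous_snd).max continuous_const).continuousAt
      exact h2.mul (continuousAt_const.max (continuousAt_const.min this))
  have hcδ : ∀ δ, Continuous (c δ) := fun δ => hc.comp (by fun_prop : Continuous fun s => (δ, s))
  have hbdd : ∀ δ, BddAbove (c δ '' univ) := fun δ => isCompact_univ.bddAbove_image
    (hcδ δ).continuousOn
  refine ⟨fun δ => sSup (c δ '' univ), isCompact_univ.continuous_sSup hc, ?_, ?_, ?_⟩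
  · intro δ δ' h
    refine csSup_le (univ_nonempty.image _) ?_
    rintro _ ⟨s, -, rfl⟩
    refine le_trans ?_ (le_csSup (hbdd δ') ⟨s, mem_univ _, rfl⟩)
    have := hb0 s
    dsimp only [c]
    gcongr
  · have : c 0 '' univ = {0} := by
      ext x; simp [c]
    change sSup (c 0 '' univ) = 0
    rw [this]; simp
  · intro s
    refine le_trans ?_ (le_csSup (hbdd (b s)) ⟨s, mem_univ _, rfl⟩)
    by_cases h : b s = 0
    · simpa [c, h] using hab s h
    · simp [c, div_self h]

theorem exists_monotone_extension {T X : Type*} [TopologicalSpace T] [CompactSpace T] [Nonempty T]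
    [PseudoMetricSpace X] (κ : T → X × ℝ) (hκ : Continuous κ) (w : T → ℝ) (hw : Continuous w)
    (h : ∀ s t, dist (κ s).1 (κ t).1 = 0 → (κ s).2 ≤ (κ t).2 → w s ≤ w t) :
    ∃ W : X × ℝ → ℝ, Continuous W ∧ (∀ x, Monotone fun y => W (x, y)) ∧ ∀ t, W (κ t) = w t := by
  let d : X × ℝ → X × ℝ → ℝ := fun p q => max (dist p.1 q.1) (max 0 (p.2 - q.2))
  have hd : Continuous ↿d := by
    change Continuous fun r : (X × ℝ) × (X × ℝ) => d r.1 r.2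
    dsimp only [d]
    fun_prop
  obtain ⟨ω, hω, hmono, hω0, hle⟩ := exists_modulus (S := T × T)
    (fun p => w p.1 - w p.2) (fun p => d (κ p.1) (κ p.2)) (by fun_prop)
    (hd.comp (by fun_prop : Continuous fun p : T × T => (κ p.1, κ p.2)))
    (fun p => le_max_of_le_left dist_nonneg) (by
      rintro ⟨s, t⟩ h0
      have h1 : dist (κ s).1 (κ t).1 ≤ 0 := (le_max_left _ _).trans h0.le
      have h2 : (κ s).2 - (κ t).2 ≤ 0 := ((le_max_right _ _).trans (le_max_right _ _)).trans h0.le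
      have := h s t (le_antisymm h1 dist_nonneg) (by linarith)
      simpa using this)
  let f : X × ℝ → T → ℝ := fun p t => w t + ω (d p (κ t))
  have hf : Continuous ↿f := by
    change Continuous fun r : (X × ℝ) × T => w r.2 + ω (d r.1 (κ r.2))
    exact (hw.comp continuous_snd).add (hω.comp (hd.comp
      (by fun_prop : Continuous fun r : (X × ℝ) × T => (r.1, κ r.2))))
  have hbdd : ∀ p, BddBelow (f p '' univ) := fun p => isCompact_univ.bddBelow_image
    (hf.comp (by fun_prop : Continuous fun t => (p, t))).continuousOn
  refine ⟨fun p => sInf (f p '' univ), isCompact_univ.continuous_sInf hf, ?_, ?_⟩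
  · intro x y y' hy
    refine le_csInf (univ_nonempty.image _) ?_
    rintro _ ⟨t, -, rfl⟩
    refine (csInf_le (hbdd _) ⟨t, mem_univ _, rfl⟩).trans ?_
    dsimp only [f]
    gcongr
    apply hmono
    dsimp only [d]
    gcongr
  · intro t
    apply le_antisymm
    · refine (csInf_le (hbdd _) ⟨t, mem_univ _, rfl⟩).trans ?_
      simp [f, d, hω0]
    · refine le_csInf (univ_nonempty.image _) ?_
      rintro _ ⟨s, -, rfl⟩
      have := hle (t, s)
      simp only [f] at this ⊢
      linarith

/-- Increasing minorant of a positive function. -/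
theorem exists_minorant (m : ℝ → ℝ) (hm : Continuous m) (T : ℝ) (hT : 0 < T)
    (hpos : ∀ t ∈ Icc 0 T, 0 < t → 0 < m t) (hm0 : ∀ t, 0 ≤ m t) :
    ∃ l : ℝ → ℝ, Continuous l ∧ StrictMonoOn l (Icc 0 T) ∧ l 0 = 0 ∧
      ∀ t ∈ Icc 0 T, l t ≤ m t * T := by
  let f : ℝ → ℝ → ℝ := fun t s => m s + max (t - s) 0
  have hf : Continuous ↿f := by
    change Continuous fun r : ℝ × ℝ => m r.2 + max (r.1 - r.2) 0
    fun_prop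
  have hfc : ∀ t, Continuous (f t) := fun t => hf.comp (by fun_prop : Continuous fun s => (t, s))
  have hbdd : ∀ t, BddBelow (f t '' Icc 0 T) := fun p => isCompact_Icc.bddBelow_image
    (hfc p).continuousOn
  have hne : (Icc 0 T).Nonempty := ⟨0, by simp [hT.le]⟩
  let F : ℝ → ℝ := fun t => sInf (f t '' Icc 0 T)
  have hF : Continuous F := isCompact_Icc.continuous_sInf hf
  have hFm : Monotone F := by
    intro t t' h
    refine le_csInf (hne.image _) ?_
    rintro _ ⟨s, hs, rfl⟩
    refine (csInf_le (hbdd _) ⟨s, hs, rfl⟩).trans ?_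
    dsimp only [f]
    gcongr
  have hFpos : ∀ t, 0 < t → 0 < F t := by
    intro t ht
    obtain ⟨s, hs, h⟩ := isCompact_Icc.exists_sInf_image_eq hne (hfc t).continuousOn
    change 0 < sInf _
    rw [h]
    rcases hs.1.eq_or_lt with rfl | h0
    · have := hm0 0
      have : 0 < max (t - 0) 0 := lt_max_of_lt_left (by linarith)
      dsimp only [f]; linarith
    · have := hpos s hs h0
      have : 0 ≤ max (t - s) 0 := le_max_right _ _
      dsimp only [f]; linarith
  have hF0 : ∀ t, 0 ≤ F t := by
    intro t
    refine le_csInf (hne.image _) ?_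
    rintro _ ⟨s, hs, rfl⟩
    have := hm0 s
    have : 0 ≤ max (t - s) 0 := le_max_right _ _
    dsimp only [f]; linarith
  refine ⟨fun t => F t * t, by fun_prop, ?_, by simp, ?_⟩
  · intro t ht t' ht' h
    have h0 : 0 < t' := ht.1.trans_lt h
    calc F t * t ≤ F t' * t := mul_le_mul_of_nonneg_right (hFm h.le) ht.1
      _ < F t' * t' := mul_lt_mul_of_pos_left h (hFpos _ h0)
  · intro t ht
    have : F t ≤ m t := by
      refine (csInf_le (hbdd _) ⟨t, ht, rfl⟩).trans ?_
      simp [f]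
    calc F t * t ≤ m t * t := mul_le_mul_of_nonneg_right this ht.1
      _ ≤ m t * T := mul_le_mul_of_nonneg_left ht.2 (hm0 t)

theorem exists_rho (m : ℝ → ℝ) (hm : Continuous m) (T : ℝ) (hT : 0 < T) (hT1 : T < 1)
    (hpos : ∀ t ∈ Ioo (0 : ℝ) 1, 0 < m t) (hm0 : ∀ t, 0 ≤ m t) :
    ∃ η₀ : ℝ, 0 < η₀ ∧ ∀ η, 0 < η → η ≤ η₀ → ∃ ρ : ℝ → ℝ, Continuous ρ ∧
      StrictMonoOn ρ (Icc 0 1) ∧ ρ 0 = 0 ∧ ρ 1 = η ∧ (∀ t ∈ Icc 0 T, ρ t ≤ m t) ∧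
      ∀ t ∈ Icc T 1, η - ρ t ≤ m t := by
  obtain ⟨l, lc, lm, l0, lle⟩ := exists_minorant m hm T hT
    (fun t ht h => hpos t ⟨h, ht.2.trans_lt hT1⟩) hm0
  obtain ⟨k, kc, km, k0, kle⟩ := exists_minorant (fun t => m (1 - t)) (by fun_prop) (1 - T)
    (by linarith) (fun t ht h => hpos _ ⟨by linarith [ht.2], by linarith⟩) (fun t => hm0 _)
  have hl : 0 < l T := by
    rw [← l0]; exact lm ⟨le_rfl, hT.le⟩ ⟨hT.le, le_rfl⟩ hT
  have hk : 0 < k (1 - T) := by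
    rw [← k0]; exact km ⟨le_rfl, by linarith⟩ ⟨by linarith, le_rfl⟩ (by linarith)
  refine ⟨2 * min (l T) (k (1 - T)), by positivity, ?_⟩
  intro η hη hle
  have h1 : η / 2 / l T ≤ 1 := by
    rw [div_le_one hl]; linarith [min_le_left (l T) (k (1 - T))]
  have h2 : η / 2 / k (1 - T) ≤ 1 := by
    rw [div_le_one hk]; linarith [min_le_right (l T) (k (1 - T))]
  have p1 : 0 < η / 2 / l T := by positivity
  have p2 : 0 < η / 2 / k (1 - T) := by positivity
  have e1 : η / 2 / l T * l T = η / 2 := by field_simp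
  have e2 : η / 2 / k (1 - T) * k (1 - T) = η / 2 := by field_simp
  set A := η / 2 / l T
  set B := η / 2 / k (1 - T)
  have lo : ∀ t ∈ Icc 0 T, A * l (min t T) + η / 2 - B * k (1 - max t T) = A * l t := by
    intro t ht
    rw [min_eq_left ht.2, max_eq_right ht.2, e2]; ring
  have hi : ∀ t ∈ Icc T 1, A * l (min t T) + η / 2 - B * k (1 - max t T)
      = η - B * k (1 - t) := by
    intro t ht
    rw [min_eq_right ht.1, max_eq_left ht.1, e1]; ring
  refine ⟨fun t => A * l (min t T) + η / 2 - B * k (1 - max t T), by fun_prop, ?_, ?_, ?_, ?_, ?_⟩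
  · have s1 : StrictMonoOn (fun t => A * l (min t T) + η / 2 - B * k (1 - max t T)) (Icc 0 T) := by
      intro t ht t' ht' h
      have := mul_lt_mul_of_pos_left (lm ht ht' h) p1
      simp only [lo t ht, lo t' ht', this]
    have s2 : StrictMonoOn (fun t => A * l (min t T) + η / 2 - B * k (1 - max t T)) (Icc T 1) := by
      intro t ht t' ht' h
      have := mul_lt_mul_of_pos_left (km (a := 1 - t') (b := 1 - t)
        ⟨by linarith [ht'.2], by linarith [ht'.1]⟩ ⟨by linarith [ht.2], by linarith [ht.1]⟩
        (by linarith)) p2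
      simp only [hi t ht, hi t' ht']
      linarith
    have := s1.union s2 (c := T) ⟨⟨hT.le, le_rfl⟩, fun x hx => hx.2⟩
      ⟨⟨le_rfl, hT1.le⟩, fun x hx => hx.1⟩
    rwa [Icc_union_Icc_eq_Icc hT.le hT1.le] at this
  · simp only [lo 0 ⟨le_rfl, hT.le⟩, l0, mul_zero]
  · simp only [hi 1 ⟨hT1.le, le_rfl⟩, sub_self, k0, mul_zero, sub_zero]
  · intro t ht
    simp only [lo t ht]
    have a1 := lle t ht
    have a2 := hm0 t
    have a3 : 0 ≤ l t := by
      rw [← l0]; exact lm.monotoneOn ⟨le_rfl, hT.le⟩ ht ht.1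
    nlinarith
  · intro t ht
    simp only [hi t ht]
    have hmem : 1 - t ∈ Icc 0 (1 - T) := ⟨by linarith [ht.2], by linarith [ht.1]⟩
    have a1 := kle (1 - t) hmem
    have a2 := hm0 t
    have a3 : 0 ≤ k (1 - t) := by
      rw [← k0]; exact km.monotoneOn ⟨le_rfl, by linarith⟩ hmem hmem.1
    simp only [sub_sub_cancel] at a1 ⊢
    nlinarith

/-! ### Making the heights strictly monotone -/

theorem exists_mid (f : ℝ → ℝ) (hf : Continuous f) (hm : MonotoneOn f (Icc 0 1)) :
    ∃ t ∈ Ioo (0 : ℝ) 1, f t = (f 0 + f 1) / 2 := by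
  have h01 : f 0 ≤ f 1 := hm (by simp) (by simp) zero_le_one
  rcases h01.eq_or_lt with h | h
  · refine ⟨1 / 2, by norm_num, ?_⟩
    have a := hm (a := 0) (b := 1 / 2) (by simp) (by norm_num) (by norm_num)
    have b := hm (a := 1 / 2) (b := 1) (by norm_num) (by simp) (by norm_num)
    linarith
  · obtain ⟨t, ht, e⟩ := intermediate_value_Ioo (zero_le_one' ℝ) hf.continuousOn
      (show (f 0 + f 1) / 2 ∈ Ioo (f 0) (f 1) from ⟨by linarith, by linarith⟩)
    exact ⟨t, ht, e⟩

theorem infDist_pos_of_arcs {Z : Type*} [MetricSpace Z] (α β : ℝ → Z) (hβ : Continuous β)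
    (hx : ∀ t ∈ Icc (0 : ℝ) 1, ∀ s ∈ Icc (0 : ℝ) 1, α t = β s → t = s ∧ (t = 0 ∨ t = 1)) :
    ∀ t ∈ Ioo (0 : ℝ) 1, 0 < Metric.infDist (α t) (β '' Icc 0 1) := by
  intro t ht
  rw [← (isCompact_Icc.image hβ).isClosed.notMem_iff_infDist_pos ⟨β 0, 0, by simp, rfl⟩]
  rintro ⟨s, hs, e⟩
  rcases (hx t ⟨ht.1.le, ht.2.le⟩ s hs e.symm).2 with rfl | rfl
  · exact lt_irrefl _ ht.1
  · exact lt_irrefl _ ht.2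

theorem cross_le {X : Type*} [MetricSpace X] (α β : ℝ → X × ℝ)
    (hx : ∀ t ∈ Icc (0 : ℝ) 1, ∀ s ∈ Icc (0 : ℝ) 1, α t = β s → t = s ∧ (t = 0 ∨ t = 1))
    (ma : MonotoneOn (fun t => (α t).2) (Icc 0 1)) (mb : MonotoneOn (fun t => (β t).2) (Icc 0 1))
    (η T S : ℝ) (hT : T ∈ Ioo (0 : ℝ) 1) (hS : S ∈ Ioo (0 : ℝ) 1) (hTS : (α T).2 = (β S).2)
    (ρ σ : ℝ → ℝ) (ρm : StrictMonoOn ρ (Icc 0 1)) (σm : StrictMonoOn σ (Icc 0 1))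
    (ρ0 : ρ 0 = 0) (ρ1 : ρ 1 = η) (σ0 : σ 0 = 0) (σ1 : σ 1 = η)
    (hρ : ∀ t ∈ Icc 0 T, ρ t ≤ Metric.infDist (α t) (β '' Icc 0 1))
    (hσ : ∀ t ∈ Icc S 1, η - σ t ≤ Metric.infDist (β t) (α '' Icc 0 1))
    (t s : ℝ) (ht : t ∈ Icc (0 : ℝ) 1) (hs : s ∈ Icc (0 : ℝ) 1) (hd : (α t).1 = (β s).1)
    (hz : (α t).2 ≤ (β s).2) : ρ t + (α t).2 ≤ σ s + (β s).2 := by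
  rcases hz.eq_or_lt with h | h
  · obtain ⟨rfl, rfl | rfl⟩ := hx t ht s hs (Prod.ext hd h)
    · rw [ρ0, σ0, h]
    · rw [ρ1, σ1, h]
  · have hdist : dist (α t) (β s) = (β s).2 - (α t).2 := by
      rw [Prod.dist_eq, hd, dist_self, Real.dist_eq, abs_of_neg (by linarith), max_eq_right]
      · ring
      · linarith
    have hσ0 : 0 ≤ σ s := by
      rw [← σ0]; exact σm.monotoneOn (by simp) hs hs.1
    have hρ1 : ρ t ≤ η := by
      rw [← ρ1]; exact ρm.monotoneOn ht (by simp) ht.2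
    rcases le_total t T with hh | hh
    · have h1 := hρ t ⟨ht.1, hh⟩
      have h2 := Metric.infDist_le_dist_of_mem (x := α t) (mem_image_of_mem β hs)
      linarith
    · rcases le_total S s with hh' | hh'
      · have h1 := hσ s ⟨hh', hs.2⟩
        have h2 := Metric.infDist_le_dist_of_mem (x := β s) (mem_image_of_mem α ht)
        rw [dist_comm] at h2
        linarith
      · have h1 := ma ⟨hT.1.le, hT.2.le⟩ ht hh
        have h2 := mb hs ⟨hS.1.le, hS.2.le⟩ hh'
        simp only at h1 h2
        linarith

theorem same_le {X : Type*} [MetricSpace X] (α : ℝ → X × ℝ) (ha : InjOn α (Icc 0 1))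
    (ma : MonotoneOn (fun t => (α t).2) (Icc 0 1))
    (ρ : ℝ → ℝ) (ρm : StrictMonoOn ρ (Icc 0 1))
    (t s : ℝ) (ht : t ∈ Icc (0 : ℝ) 1) (hs : s ∈ Icc (0 : ℝ) 1) (hd : (α t).1 = (α s).1)
    (hz : (α t).2 ≤ (α s).2) : ρ t + (α t).2 ≤ ρ s + (α s).2 := by
  rcases hz.eq_or_lt with h | h
  · rw [ha ht hs (Prod.ext hd h)]
  · have : t ≤ s := by
      by_contra! hc
      have := ma hs ht hc.le
      simp only at this
      linarith
    have := ρm.monotoneOn ht hs this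
    linarith

theorem klee {X : Type*} [MetricSpace X] (α β : ℝ → X × ℝ) (hα : Continuous α) (hβ : Continuous β)
    (ha : InjOn α (Icc 0 1)) (hb : InjOn β (Icc 0 1)) (h0 : α 0 = β 0) (h1 : α 1 = β 1)
    (hx : ∀ t ∈ Icc (0 : ℝ) 1, ∀ s ∈ Icc (0 : ℝ) 1, α t = β s → t = s ∧ (t = 0 ∨ t = 1))
    (ma : MonotoneOn (fun t => (α t).2) (Icc 0 1)) (mb : MonotoneOn (fun t => (β t).2) (Icc 0 1)) :
    ∃ g : X × ℝ → ℝ, Continuous g ∧ (∀ x, StrictMono fun y => g (x, y)) ∧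
      (∀ x, Tendsto (fun y => g (x, y)) atTop atTop) ∧
      (∀ x, Tendsto (fun y => g (x, y)) atBot atBot) ∧
      StrictMonoOn (fun t => g (α t)) (Icc 0 1) ∧ StrictMonoOn (fun t => g (β t)) (Icc 0 1) ∧
      g (α 0) = -1 ∧ g (α 1) = 1 := by
  have hx' : ∀ t ∈ Icc (0 : ℝ) 1, ∀ s ∈ Icc (0 : ℝ) 1, β t = α s → t = s ∧ (t = 0 ∨ t = 1) := by
    intro t ht s hs e
    obtain ⟨rfl, h⟩ := hx s hs t ht e.symm
    exact ⟨rfl, h⟩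
  obtain ⟨T, hT, eT⟩ := exists_mid _ (continuous_snd.comp hα) ma
  obtain ⟨S, hS, eS⟩ := exists_mid _ (continuous_snd.comp hβ) mb
  have eTS : (α T).2 = (β S).2 := by
    simp only [Function.comp_apply] at eT eS
    rw [eT, eS, h0, h1]
  obtain ⟨η₁, p1, H1⟩ := exists_rho (fun t => Metric.infDist (α t) (β '' Icc 0 1))
    ((Metric.continuous_infDist_pt _).comp hα) T hT.1 hT.2 (infDist_pos_of_arcs α β hβ hx)
    (fun _ => Metric.infDist_nonneg)
  obtain ⟨η₂, p2, H2⟩ := exists_rho (fun t => Metric.infDist (β t) (α '' Icc 0 1))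
    ((Metric.continuous_infDist_pt _).comp hβ) S hS.1 hS.2 (infDist_pos_of_arcs β α hα hx')
    (fun _ => Metric.infDist_nonneg)
  obtain ⟨ρ, ρc, ρm, ρ0, ρ1, ρlo, ρhi⟩ := H1 (min η₁ η₂) (lt_min p1 p2) (min_le_left _ _)
  obtain ⟨σ, σc, σm, σ0, σ1, σlo, σhi⟩ := H2 (min η₁ η₂) (lt_min p1 p2) (min_le_right _ _)
  have : Nonempty (Icc (0 : ℝ) 1 ⊕ Icc (0 : ℝ) 1) := ⟨Sum.inl ⟨0, by simp⟩⟩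
  obtain ⟨W, Wc, Wm, We⟩ := exists_monotone_extension (T := Icc (0 : ℝ) 1 ⊕ Icc (0 : ℝ) 1)
    (Sum.elim (fun t => α t) (fun t => β t)) (by fun_prop)
    (Sum.elim (fun t => ρ t + (α t).2) (fun t => σ t + (β t).2)) (by fun_prop) (by
      rintro (⟨s, hs⟩ | ⟨s, hs⟩) (⟨t, ht⟩ | ⟨t, ht⟩) hd hz
      · exact same_le α ha ma ρ ρm s t hs ht (dist_eq_zero.1 hd) hz
      · exact cross_le α β hx ma mb _ T S hT hS eTS ρ σ ρm σm ρ0 ρ1 σ0 σ1 ρlo σhi s t hs ht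
          (dist_eq_zero.1 hd) hz
      · exact cross_le β α hx' mb ma _ S T hS hT eTS.symm σ ρ σm ρm σ0 σ1 ρ0 ρ1 σlo ρhi s t hs ht
          (dist_eq_zero.1 hd) hz
      · exact same_le β hb mb σ σm s t hs ht (dist_eq_zero.1 hd) hz)
  have Wa : ∀ t ∈ Icc (0 : ℝ) 1, W (α t) = ρ t + (α t).2 := fun t ht => We (Sum.inl ⟨t, ht⟩)
  have Wb : ∀ t ∈ Icc (0 : ℝ) 1, W (β t) = σ t + (β t).2 := fun t ht => We (Sum.inr ⟨t, ht⟩)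
  let G : X × ℝ → ℝ := fun p => W p + p.2
  have Gc : Continuous G := by fun_prop
  have Gm : ∀ x, StrictMono fun y => G (x, y) := fun x => (Wm x).add_strictMono strictMono_id
  have Ga : StrictMonoOn (fun t => G (α t)) (Icc 0 1) := by
    intro s hs t ht h
    simp only [G, Wa s hs, Wa t ht]
    have := ρm hs ht h
    have := ma hs ht h.le
    simp only at this
    linarith
  have Gb : StrictMonoOn (fun t => G (β t)) (Icc 0 1) := by
    intro s hs t ht h
    simp only [G, Wb s hs, Wb t ht]
    have := σm hs ht h
    have := mb hs ht h.le
    simp only at this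
    linarith
  have Gt : ∀ x, Tendsto (fun y => G (x, y)) atTop atTop := by
    intro x
    refine tendsto_atTop_mono' _ ?_ (tendsto_atTop_add_const_left atTop (W (x, 0)) tendsto_id)
    filter_upwards [eventually_ge_atTop 0] with y hy
    have := Wm x hy
    simp only [G, id] at this ⊢
    linarith
  have Gbt : ∀ x, Tendsto (fun y => G (x, y)) atBot atBot := by
    intro x
    refine tendsto_atBot_mono' _ ?_ (tendsto_atBot_add_const_left atBot (W (x, 0)) tendsto_id)
    filter_upwards [eventually_le_atBot 0] with y hy
    have := Wm x hy
    simp only [G, id] at this ⊢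
    linarith
  have hlt : G (α 0) < G (α 1) := Ga (by simp) (by simp) zero_lt_one
  set c := 2 / (G (α 1) - G (α 0)) with hc
  have hcpos : 0 < c := div_pos two_pos (by linarith)
  have key : ∀ u v : ℝ, u < v → c * (u - G (α 0)) - 1 < c * (v - G (α 0)) - 1 := by
    intro u v h
    have : c * (u - G (α 0)) < c * (v - G (α 0)) := mul_lt_mul_of_pos_left (by linarith) hcpos
    linarith
  refine ⟨fun p => c * (G p - G (α 0)) - 1, by fun_prop, fun x y y' h => key _ _ (Gm x h), ?_, ?_,
    fun s hs t ht h => key _ _ (Ga hs ht h), fun s hs t ht h => key _ _ (Gb hs ht h), ?_, ?_⟩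
  · intro x
    simp only [sub_eq_add_neg]
    exact tendsto_atTop_add_const_right _ _ ((tendsto_atTop_add_const_right _ _
      (Gt x)).const_mul_atTop hcpos)
  · intro x
    simp only [sub_eq_add_neg]
    exact tendsto_atBot_add_const_right _ _ ((tendsto_atBot_add_const_right _ _
      (Gbt x)).const_mul_atBot hcpos)
  · simp
  · have : G (α 1) - G (α 0) ≠ 0 := by linarith
    simp only [hc]
    field_simp
    norm_num

/-! ### The strictly monotone case -/

/-- The union of the graphs of two functions over `[-1,1]`. -/
def twoGraphs {X : Type*} (A B : ℝ → X) : Set (X × ℝ) :=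
  {p | p.2 ∈ Icc (-1 : ℝ) 1 ∧ (p.1 = A p.2 ∨ p.1 = B p.2)}

theorem exists_graph {X : Type*} [TopologicalSpace X] (γ : ℝ → X × ℝ) (hγ : Continuous γ)
    (hm : StrictMonoOn (fun t => (γ t).2) (Icc 0 1)) (h0 : (γ 0).2 = -1) (h1 : (γ 1).2 = 1) :
    ∃ A : ℝ → X, Continuous A ∧ (∀ y, y ≤ -1 → A y = (γ 0).1) ∧ (∀ y, 1 ≤ y → A y = (γ 1).1) ∧
      γ '' Icc 0 1 = {p | p.2 ∈ Icc (-1 : ℝ) 1 ∧ p.1 = A p.2} := by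
  have hmaps : ∀ t : Icc (0 : ℝ) 1, (γ t).2 ∈ Icc (-1 : ℝ) 1 := by
    rintro ⟨t, ht⟩
    have a := hm.monotoneOn (by simp) ht ht.1
    have b := hm.monotoneOn ht (by simp) ht.2
    simp only [h0, h1] at a b
    exact ⟨a, b⟩
  let f : Icc (0 : ℝ) 1 → Icc (-1 : ℝ) 1 := fun t => ⟨(γ t).2, hmaps t⟩
  have hf : Continuous f := by fun_prop
  have hbij : Function.Bijective f := by
    constructor
    · rintro ⟨s, hs⟩ ⟨t, ht⟩ e
      exact Subtype.ext (hm.injOn hs ht (congrArg Subtype.val e))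
    · rintro ⟨y, hy⟩
      obtain ⟨t, ht, e⟩ := intermediate_value_Icc (zero_le_one' ℝ)
        (f := fun t => (γ t).2) (by fun_prop) (show y ∈ Icc (γ 0).2 (γ 1).2 by rwa [h0, h1])
      exact ⟨⟨t, ht⟩, Subtype.ext e⟩
  let e : Icc (0 : ℝ) 1 ≃ₜ Icc (-1 : ℝ) 1 :=
    Continuous.homeoOfEquivCompactToT2 (f := Equiv.ofBijective f hbij) hf
  have he : ∀ t, e t = f t := fun t => rfl
  have h11 : (-1 : ℝ) ≤ 1 := by norm_num
  have hA : ∀ t (ht : t ∈ Icc (0 : ℝ) 1),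
      IccExtend h11 (fun y => (γ (e.symm y)).1) (γ t).2 = (γ t).1 := by
    intro t ht
    rw [IccExtend_of_mem _ _ (hmaps ⟨t, ht⟩)]
    have : e.symm ⟨(γ t).2, hmaps ⟨t, ht⟩⟩ = ⟨t, ht⟩ := by
      rw [Homeomorph.symm_apply_eq, he]
    rw [this]
  refine ⟨IccExtend h11 (fun y => (γ (e.symm y)).1), ?_, ?_, ?_, ?_⟩
  · apply Continuous.Icc_extend'
    fun_prop
  · intro y hy
    have := hA 0 (by simp)
    rw [h0] at this
    rw [← this, IccExtend_of_le_left _ _ hy, IccExtend_of_le_left _ _ le_rfl]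
  · intro y hy
    have := hA 1 (by simp)
    rw [h1] at this
    rw [← this, IccExtend_of_right_le _ _ hy, IccExtend_of_right_le _ _ le_rfl]
  · ext p
    constructor
    · rintro ⟨t, ht, rfl⟩
      exact ⟨hmaps ⟨t, ht⟩, (hA t ht).symm⟩
    · rintro ⟨hp, hp'⟩
      obtain ⟨⟨t, ht⟩, et⟩ := hbij.2 ⟨p.2, hp⟩
      have et' : (γ t).2 = p.2 := congrArg Subtype.val et
      refine ⟨t, ht, Prod.ext ?_ et'⟩
      rw [hp', ← et', hA t ht]

theorem exists_angle (D : ℝ → ℂ) (hD : Continuous D) (hne : ∀ y ∈ Ioo (-1 : ℝ) 1, D y ≠ 0) :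
    ∃ θ : ℝ → ℝ, ContinuousOn θ (Ioo (-1) 1) ∧ (∀ y ∉ Ioo (-1 : ℝ) 1, θ y = 0) ∧
      ∀ y ∈ Ioo (-1 : ℝ) 1, D y = ‖D y‖ * Complex.exp (θ y * Complex.I) := by
  have : ContractibleSpace (Ioo (-1 : ℝ) 1) :=
    (convex_Ioo (-1 : ℝ) 1).contractibleSpace ⟨0, by norm_num⟩
  have : LocallyPathConnectedSpace (Ioo (-1 : ℝ) 1) := isOpen_Ioo.locallyPathConnectedSpace
  let f : C(Ioo (-1 : ℝ) 1, ℂ) := ⟨fun y => D y, by fun_prop⟩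
  let a₀ : Ioo (-1 : ℝ) 1 := ⟨0, by norm_num⟩
  obtain ⟨L, ⟨-, hL⟩, -⟩ := Complex.isCoveringMapOn_exp.existsUnique_continuousMap_lifts f
    (a₀ := a₀) (e₀ := Complex.log (D 0)) (Complex.exp_log (hne 0 (by norm_num)))
    (fun a => hne a a.2)
  have hL' : ∀ y : Ioo (-1 : ℝ) 1, Complex.exp (L y) = D y := fun y => congrFun hL y
  classical
  refine ⟨fun y => if h : y ∈ Ioo (-1 : ℝ) 1 then (L ⟨y, h⟩).im else 0, ?_, ?_, ?_⟩
  · rw [continuousOn_iff_continuous_domRestrict]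
    have : Continuous fun y : Ioo (-1 : ℝ) 1 => (L y).im := by fun_prop
    convert this using 2 with y
    simp only [Set.domRestrict_apply]
    rw [dif_pos y.2]
  · intro y hy
    simp only
    rw [dif_neg hy]
  · intro y hy
    simp only
    rw [dif_pos hy, ← hL' ⟨y, hy⟩, Complex.norm_exp, Complex.ofReal_exp, ← Complex.exp_add,
      Complex.re_add_im]

theorem AmbIso.twist (D : ℝ → ℂ) (hD : Continuous D) (hne : ∀ y ∈ Ioo (-1 : ℝ) 1, D y ≠ 0)
    (hz : ∀ y ∉ Ioo (-1 : ℝ) 1, D y = 0) :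
    AmbIso (twoGraphs (fun _ => (0 : ℂ)) D) (twoGraphs (fun _ => (0 : ℂ)) (fun y => (‖D y‖ : ℂ))) := by
  obtain ⟨θ, θc, θ0, hθ⟩ := exists_angle D hD hne
  let Θ : ℂ → ℝ → ℝ := fun w y => θ y * max 0 (min 1 (2 - ‖w‖ / ‖D y‖))
  let F : ℝ → ℂ × ℝ → ℂ × ℝ := fun s p =>
    (p.1 * Complex.exp (((-(s * Θ p.1 p.2) : ℝ) : ℂ) * Complex.I), p.2)
  have hnorm : ∀ s p, ‖(F s p).1‖ = ‖p.1‖ := by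
    intro s p
    simp only [F, norm_mul, Complex.norm_exp_ofReal_mul_I, mul_one]
  have hΘ : ∀ s p, Θ (F s p).1 (F s p).2 = Θ p.1 p.2 := by
    intro s p
    simp only [Θ, hnorm]
    rfl
  have hinv : ∀ s p, F (-s) (F s p) = p := by
    intro s p
    refine Prod.ext ?_ rfl
    change (F s p).1 * Complex.exp (((-(-s * Θ (F s p).1 (F s p).2) : ℝ) : ℂ) * Complex.I) = p.1
    rw [hΘ]
    simp only [F]
    rw [mul_assoc, ← Complex.exp_add, ← add_mul, ← Complex.ofReal_add]
    simp
  have hFc : Continuous fun q : ℝ × (ℂ × ℝ) => F q.1 q.2 := by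
    refine Continuous.prodMk ?_ (by fun_prop)
    rw [continuous_iff_continuousAt]
    rintro ⟨s, w, y⟩
    by_cases hy : y ∈ Ioo (-1 : ℝ) 1
    · have c1 : ContinuousAt (fun q : ℝ × (ℂ × ℝ) => θ q.2.2) (s, w, y) :=
        ContinuousAt.comp (f := fun q : ℝ × (ℂ × ℝ) => q.2.2) (g := θ)
          (θc.continuousAt (isOpen_Ioo.mem_nhds hy)) (by fun_prop)
      have c2 : ContinuousAt (fun q : ℝ × (ℂ × ℝ) => ‖q.2.1‖ / ‖D q.2.2‖) (s, w, y) := by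
        refine ContinuousAt.div (by fun_prop) (by fun_prop) ?_
        simpa using hne y hy
      have c3 : ContinuousAt (fun q : ℝ × (ℂ × ℝ) => -(q.1 * Θ q.2.1 q.2.2)) (s, w, y) :=
        (continuousAt_fst.mul (c1.mul (continuousAt_const.max
          (continuousAt_const.min (continuousAt_const.sub c2))))).neg
      refine ContinuousAt.mul (by fun_prop) ?_
      refine Complex.continuous_exp.continuousAt.comp ?_
      refine ContinuousAt.mul ?_ continuousAt_const
      exact Complex.continuous_ofReal.continuousAt.comp c3
    · by_cases hw : w = 0
      · subst hw
        rw [ContinuousAt]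
        simp only [zero_mul]
        have : Tendsto (fun q : ℝ × (ℂ × ℝ) => ‖q.2.1‖) (nhds (s, 0, y)) (nhds 0) := by
          have : Continuous (fun q : ℝ × (ℂ × ℝ) => ‖q.2.1‖) := by fun_prop
          simpa using this.tendsto (s, 0, y)
        refine squeeze_zero_norm (fun q => ?_) this
        exact (hnorm q.1 q.2).le
      · have : ContinuousAt (fun q : ℝ × (ℂ × ℝ) => q.2.1) (s, w, y) := by fun_prop
        refine this.congr ?_
        have ho : IsOpen {q : ℝ × (ℂ × ℝ) | 2 * ‖D q.2.2‖ < ‖q.2.1‖} :=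
          isOpen_lt (by fun_prop) (by fun_prop)
        have hmem : (s, w, y) ∈ {q : ℝ × (ℂ × ℝ) | 2 * ‖D q.2.2‖ < ‖q.2.1‖} := by
          simp [hz y hy, hw]
        filter_upwards [ho.mem_nhds hmem] with q hq
        have hq0 : Θ q.2.1 q.2.2 = 0 := by
          by_cases hy' : q.2.2 ∈ Ioo (-1 : ℝ) 1
          · have hp : 0 < ‖D q.2.2‖ := norm_pos_iff.2 (hne _ hy')
            have : 2 < ‖q.2.1‖ / ‖D q.2.2‖ := by
              rw [lt_div_iff₀ hp]; exact hq
            simp only [Θ]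
            rw [max_eq_left, mul_zero]
            exact (min_le_right _ _).trans (by linarith)
          · simp only [Θ, θ0 _ hy', zero_mul]
        simp [hq0]
  refine ⟨fun q => F q.1 q.2, hFc.continuousOn, ?_, ?_, ?_⟩
  · intro p; simp [F]
  · rintro s -
    let e : ℂ × ℝ ≃ₜ ℂ × ℝ :=
      { toFun := F s
        invFun := F (-s)
        left_inv := hinv s
        right_inv := fun p => by simpa using hinv (-s) p
        continuous_toFun := hFc.comp (by fun_prop : Continuous fun p : ℂ × ℝ => (s, p))
        continuous_invFun := hFc.comp (by fun_prop : Continuous fun p : ℂ × ℝ => (-s, p)) }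
    exact e.isHomeomorph
  · have h0 : ∀ y, F 1 (0, y) = (0, y) := by intro y; simp [F]
    have h1 : ∀ y, F 1 (D y, y) = ((‖D y‖ : ℂ), y) := by
      intro y
      by_cases hy : y ∈ Ioo (-1 : ℝ) 1
      · have hp : ‖D y‖ ≠ 0 := norm_ne_zero_iff.2 (hne _ hy)
        have : Θ (D y) y = θ y := by
          simp only [Θ, div_self hp]; norm_num
        simp only [F, this]
        refine Prod.ext ?_ rfl
        change D y * _ = (‖D y‖ : ℂ)
        conv_lhs => rw [hθ y hy]
        rw [mul_assoc, ← Complex.exp_add, ← add_mul, ← Complex.ofReal_add]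
        simp
      · rw [hz y hy, h0]; simp
    ext ⟨w, y⟩
    constructor
    · rintro ⟨⟨w', y'⟩, ⟨hy, h | h⟩, e⟩
      · simp only at h e hy
        rw [h, h0] at e
        obtain ⟨rfl, rfl⟩ := Prod.mk.inj e
        exact ⟨hy, Or.inl rfl⟩
      · simp only at h e hy
        rw [h, h1] at e
        obtain ⟨rfl, rfl⟩ := Prod.mk.inj e
        exact ⟨hy, Or.inr rfl⟩
    · rintro ⟨hy, h | h⟩
      · simp only at h; subst h
        exact ⟨(0, y), ⟨hy, Or.inl rfl⟩, h0 y⟩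
      · simp only at h; subst h
        exact ⟨(D y, y), ⟨hy, Or.inr rfl⟩, h1 y⟩

/-- The round circle in our coordinates. -/
def stdCircle : Set (ℂ × ℝ) := {p | p.1.re ^ 2 + p.2 ^ 2 = 1 ∧ p.1.im = 0}

theorem AmbIso.to_circle (r : ℝ → ℝ) (hr : Continuous r) (hpos : ∀ y ∈ Ioo (-1 : ℝ) 1, 0 < r y)
    (hz : ∀ y ∉ Ioo (-1 : ℝ) 1, r y = 0) :
    AmbIso (twoGraphs (fun _ => (0 : ℂ)) (fun y => (r y : ℂ))) stdCircle := by
  let e : ℂ × ℝ ≃ₜ (ℝ × ℝ) × ℝ :=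
    { toFun := fun p => ((p.1.im, p.2), p.1.re)
      invFun := fun p => (⟨p.2, p.1.1⟩, p.1.2)
      left_inv := fun p => by simp
      right_inv := fun p => by simp
      continuous_toFun := by fun_prop
      continuous_invFun := by
        have : Continuous fun p : (ℝ × ℝ) × ℝ => ((p.2 : ℂ) + p.1.1 * Complex.I, p.1.2) := by
          fun_prop
        convert this using 2 with p
        exact Prod.ext (Complex.mk_eq_add_mul_I _ _) rfl }
  refine AmbIso.transport e ?_
  let s : ℝ → ℝ := fun y => Real.sqrt (1 - y ^ 2)
  have sc : Continuous s := by fun_prop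
  have spos : ∀ y ∈ Ioo (-1 : ℝ) 1, 0 < s y := by
    intro y hy
    exact Real.sqrt_pos.2 (by nlinarith [hy.1, hy.2])
  have s0 : ∀ y ∉ Ioo (-1 : ℝ) 1, s y = 0 := by
    intro y hy
    refine Real.sqrt_eq_zero_of_nonpos ?_
    by_contra! h
    have h2 : y ^ 2 < 1 := by linarith
    have := abs_lt.1 ((sq_lt_one_iff_abs_lt_one y).1 h2)
    exact hy ⟨this.1, this.2⟩
  let q : ℝ → ℝ → ℝ := fun x y => max 0 (min 1 (x / r y))
  have q0 : ∀ x y, 0 ≤ q x y := fun x y => le_max_left _ _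
  have q1 : ∀ x y, q x y ≤ 1 := fun x y => max_le zero_le_one (min_le_left _ _)
  let g : (ℝ × ℝ) × ℝ → ℝ := fun p => p.2 - s p.1.2 + (2 * s p.1.2 - r p.1.2) * q p.2 p.1.2
  have hbd : ∀ x y, |(2 * s y - r y) * q x y| ≤ |2 * s y - r y| := by
    intro x y
    rw [abs_mul, abs_of_nonneg (q0 x y)]
    exact mul_le_of_le_one_right (abs_nonneg _) (q1 x y)
  have gc : Continuous g := by
    refine Continuous.add (by fun_prop) ?_
    rw [continuous_iff_continuousAt]
    rintro ⟨⟨i, y⟩, x⟩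
    by_cases hy : y ∈ Ioo (-1 : ℝ) 1
    · have c2 : ContinuousAt (fun p : (ℝ × ℝ) × ℝ => p.2 / r p.1.2) ((i, y), x) :=
        ContinuousAt.div (by fun_prop) (by fun_prop) (hpos y hy).ne'
      exact ContinuousAt.mul (by fun_prop) (continuousAt_const.max (continuousAt_const.min c2))
    · rw [ContinuousAt]
      simp only [s0 y hy, hz y hy, mul_zero, sub_zero, zero_mul]
      have : Tendsto (fun p : (ℝ × ℝ) × ℝ => |2 * s p.1.2 - r p.1.2|) (nhds ((i, y), x))
          (nhds 0) := by
        have : Continuous (fun p : (ℝ × ℝ) × ℝ => |2 * s p.1.2 - r p.1.2|) := by fun_prop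
        simpa [s0 y hy, hz y hy] using this.tendsto ((i, y), x)
      exact squeeze_zero_norm (fun p => hbd p.2 p.1.2) this
  have gm : ∀ x, StrictMono fun y => g (x, y) := by
    rintro ⟨i, y⟩ x x' h
    simp only [g]
    by_cases hy : y ∈ Ioo (-1 : ℝ) 1
    · have hr := hpos y hy
      have hs := spos y hy
      have hq : q x y ≤ q x' y := by
        simp only [q]; gcongr
      have hq' : r y * q x' y - r y * q x y ≤ x' - x := by
        have e1 : ∀ z, r y * q z y = max 0 (min (r y) z) := by
          intro z
          simp only [q]
          rw [mul_max_of_nonneg _ _ hr.le, mul_min_of_nonneg _ _ hr.le, mul_one, mul_zero,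
            mul_div_cancel₀ _ hr.ne']
        rw [e1, e1]
        rcases max_cases 0 (min (r y) x') with h1 | h1 <;>
        rcases max_cases 0 (min (r y) x) with h2 | h2 <;>
        rcases min_cases (r y) x' with h3 | h3 <;>
        rcases min_cases (r y) x with h4 | h4 <;> linarith
      rcases hq.eq_or_lt with h1 | h1
      · rw [h1]; linarith
      · have := mul_lt_mul_of_pos_left h1 hs
        nlinarith
    · simp only [s0 y hy, hz y hy]; linarith
  have gb : ∀ y x z, |g ((y, x), z) - z| ≤ s x + |2 * s x - r x| := by
    intro i y x
    have h1 := hbd x y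
    have h2 : 0 ≤ s y := Real.sqrt_nonneg _
    simp only [g]
    rw [abs_le] at h1 ⊢
    constructor <;> linarith [h1.1, h1.2]
  have hmain := AmbIso.fiber g gc gm (by
    rintro ⟨i, y⟩
    refine tendsto_atTop_mono (fun x => ?_)
      (tendsto_atTop_add_const_right _ (-(s y + |2 * s y - r y|)) tendsto_id)
    have := (abs_le.1 (gb i y x)).1
    simp only [id]
    linarith) (by
    rintro ⟨i, y⟩
    refine tendsto_atBot_mono (fun x => ?_)
      (tendsto_atBot_add_const_right _ (s y + |2 * s y - r y|) tendsto_id)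
    have := (abs_le.1 (gb i y x)).2
    simp only [id]
    linarith) (e '' twoGraphs (fun _ => (0 : ℂ)) (fun y => (r y : ℂ)))
  convert hmain using 1
  have g0 : ∀ i y, g ((i, y), 0) = - s y := by
    intro i y; simp [g, q]
  have g1 : ∀ i y, g ((i, y), r y) = s y := by
    intro i y
    by_cases hy : y ∈ Ioo (-1 : ℝ) 1
    · simp only [g, q, div_self (hpos y hy).ne']
      norm_num
      ring
    · simp [g, q, s0 y hy, hz y hy]
  have hsy : ∀ y ∈ Icc (-1 : ℝ) 1, s y ^ 2 + y ^ 2 = 1 := by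
    intro y hy
    simp only [s]
    rw [Real.sq_sqrt (by nlinarith [hy.1, hy.2])]
    ring
  rw [image_image]
  ext p
  constructor
  · rintro ⟨⟨w, y⟩, ⟨h1, h2⟩, rfl⟩
    simp only at h1 h2
    have hy : y ∈ Icc (-1 : ℝ) 1 := by
      have : y ^ 2 ≤ 1 := by nlinarith [sq_nonneg w.re]
      exact abs_le.1 ((sq_le_one_iff_abs_le_one y).1 this)
    have hw : w.re ^ 2 = s y ^ 2 := by linarith [hsy y hy]
    rcases sq_eq_sq_iff_eq_or_eq_neg.1 hw with h | h
    · refine ⟨((r y : ℂ), y), ⟨hy, Or.inr rfl⟩, ?_⟩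
      change ((((r y : ℂ)).im, y), g ((((r y : ℂ)).im, y), ((r y : ℂ)).re)) = ((w.im, y), w.re)
      rw [Complex.ofReal_re, Complex.ofReal_im, g1, h, h2]
    · refine ⟨(0, y), ⟨hy, Or.inl rfl⟩, ?_⟩
      change (((0 : ℂ).im, y), g (((0 : ℂ).im, y), (0 : ℂ).re)) = ((w.im, y), w.re)
      rw [Complex.zero_re, Complex.zero_im, g0, h, h2]
  · rintro ⟨⟨w, y⟩, ⟨hy, h | h⟩, rfl⟩
    · simp only at h hy; subst h
      refine ⟨(((- s y : ℝ) : ℂ), y), ⟨?_, Complex.ofReal_im _⟩, ?_⟩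
      · simpa using hsy y hy
      · change ((((- s y : ℝ) : ℂ).im, y), ((- s y : ℝ) : ℂ).re) =
          (((0 : ℂ).im, y), g (((0 : ℂ).im, y), (0 : ℂ).re))
        rw [Complex.ofReal_re, Complex.ofReal_im, Complex.zero_re, Complex.zero_im, g0]
    · simp only at h hy; subst h
      refine ⟨((s y : ℂ), y), ⟨?_, Complex.ofReal_im _⟩, ?_⟩
      · simpa using hsy y hy
      · change (((s y : ℂ).im, y), (s y : ℂ).re) =
          ((((r y : ℂ)).im, y), g ((((r y : ℂ)).im, y), ((r y : ℂ)).re))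
        rw [Complex.ofReal_re, Complex.ofReal_im, Complex.ofReal_re, Complex.ofReal_im, g1]

/-- Two weakly monotone arcs with common endpoints form an unknot. -/
theorem two_arcs_unknot (α β : ℝ → ℂ × ℝ) (hα : Continuous α) (hβ : Continuous β)
    (ha : InjOn α (Icc 0 1)) (hb : InjOn β (Icc 0 1)) (h0 : α 0 = β 0) (h1 : α 1 = β 1)
    (hx : ∀ t ∈ Icc (0 : ℝ) 1, ∀ s ∈ Icc (0 : ℝ) 1, α t = β s → t = s ∧ (t = 0 ∨ t = 1))
    (ma : MonotoneOn (fun t => (α t).2) (Icc 0 1)) (mb : MonotoneOn (fun t => (β t).2) (Icc 0 1)) :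
    AmbIso (α '' Icc 0 1 ∪ β '' Icc 0 1) stdCircle := by
  obtain ⟨g, gc, gm, gt, gb, ga, gβ, g0, g1⟩ := klee α β hα hβ ha hb h0 h1 hx ma mb
  let Φ : ℂ × ℝ → ℂ × ℝ := fun p => (p.1, g p)
  have Φc : Continuous Φ := by fun_prop
  have Φi : Function.Injective Φ := (fiber_isHomeomorph g gc gm gt gb).injective
  obtain ⟨A, Ac, A0, A1, hA⟩ := exists_graph (fun t => Φ (α t)) (by fun_prop) ga g0 g1
  obtain ⟨B, Bc, B0, B1, hB⟩ := exists_graph (fun t => Φ (β t)) (by fun_prop) gβ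
    (by rw [← h0]; exact g0) (by rw [← h1]; exact g1)
  have hDne : ∀ y ∈ Ioo (-1 : ℝ) 1, B y + -A y ≠ 0 := by
    intro y hy e
    have e' : A y = B y := by
      rw [← sub_eq_add_neg, sub_eq_zero] at e; exact e.symm
    have m1 : (A y, y) ∈ (fun t => Φ (α t)) '' Icc 0 1 := by
      rw [hA]; exact ⟨⟨hy.1.le, hy.2.le⟩, rfl⟩
    have m2 : (A y, y) ∈ (fun t => Φ (β t)) '' Icc 0 1 := by
      rw [hB]; exact ⟨⟨hy.1.le, hy.2.le⟩, e'⟩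
    obtain ⟨t, ht, et⟩ := m1
    obtain ⟨s, hs, es⟩ := m2
    have hy2 : g (α t) = y := congrArg Prod.snd et
    rcases (hx t ht s hs (Φi (et.trans es.symm))).2 with rfl | rfl
    · rw [g0] at hy2; exact hy.1.ne hy2
    · rw [g1] at hy2; exact hy.2.ne hy2.symm
  have hDz : ∀ y ∉ Ioo (-1 : ℝ) 1, B y + -A y = 0 := by
    intro y hy
    rcases le_or_gt y (-1) with h | h
    · rw [A0 y h, B0 y h, h0]; ring
    · have h : 1 ≤ y := by
        by_contra! h'
        exact hy ⟨h, h'⟩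
      rw [A1 y h, B1 y h, h1]; ring
  have step1 := AmbIso.fiber g gc gm gt gb (α '' Icc 0 1 ∪ β '' Icc 0 1)
  have e1 : (fun p : ℂ × ℝ => (p.1, g p)) '' (α '' Icc 0 1 ∪ β '' Icc 0 1) = twoGraphs A B := by
    rw [image_union, image_image, image_image]
    change (fun t => Φ (α t)) '' Icc 0 1 ∪ (fun t => Φ (β t)) '' Icc 0 1 = _
    rw [hA, hB]
    ext p
    simp only [twoGraphs, mem_union, mem_ofPred_eq]
    tauto
  rw [e1] at step1
  have step2 := AmbIso.translate (fun y => -A y) (by fun_prop) (twoGraphs A B)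
  have e2 : (fun p : ℂ × ℝ => (p.1 + -A p.2, p.2)) '' twoGraphs A B =
      twoGraphs (fun _ => 0) (fun y => B y + -A y) := by
    ext ⟨w, y⟩
    constructor
    · rintro ⟨⟨w', y'⟩, ⟨hy, h⟩, e⟩
      obtain ⟨rfl, rfl⟩ := Prod.mk.inj e
      simp only at h hy ⊢
      rcases h with rfl | rfl
      · exact ⟨hy, Or.inl (by simp)⟩
      · exact ⟨hy, Or.inr rfl⟩
    · rintro ⟨hy, h⟩
      refine ⟨(w + A y, y), ⟨hy, ?_⟩, by simp⟩
      simp only at h ⊢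
      rcases h with rfl | rfl
      · left; simp
      · right; ring
  rw [e2] at step2
  have step3 := AmbIso.twist (fun y => B y + -A y) (by fun_prop) hDne hDz
  have step4 := AmbIso.to_circle (fun y => ‖B y + -A y‖) (by fun_prop)
    (fun y hy => norm_pos_iff.2 (hDne y hy)) (fun y hy => by simp only [hDz y hy, norm_zero])
  exact step1.trans (step2.trans (step3.trans step4))

/-! ### Combinatorics of the height function -/

/-- The loop `f` has no four cyclically ordered parameters with alternating values. -/
def NoAlt (f : ℝ → ℝ) : Prop :=
  ∀ a b c d : ℝ, a < b → b < c → c < d → d < a + 1 →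
    ¬ (f a < f b ∧ f c < f b ∧ f c < f d ∧ f a < f d)

theorem NoAlt.neg {f : ℝ → ℝ} (hp : ∀ t, f (t + 1) = f t) (h : NoAlt f) :
    NoAlt fun t => - f t := by
  rintro a b c d ab bc cd da ⟨h1, h2, h3, h4⟩
  refine h b c d (a + 1) bc cd da (by linarith) ⟨?_, ?_, ?_, ?_⟩ <;> (try rw [hp]) <;> linarith

theorem NoAlt.exists_arcs {f : ℝ → ℝ} (hf : Continuous f) (hp : ∀ t, f (t + 1) = f t)
    (h : NoAlt f) : ∃ b a : ℝ, b < a ∧ a < b + 1 ∧ MonotoneOn f (Icc b a) ∧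
      AntitoneOn f (Icc a (b + 1)) := by
  have hper : Function.Periodic f 1 := hp
  obtain ⟨b, hb, hbmin⟩ := isCompact_Icc.exists_isMinOn (nonempty_Icc.2 (zero_le_one' ℝ))
    hf.continuousOn
  have hmin : ∀ t, f b ≤ f t := by
    intro t
    obtain ⟨y, hy, e⟩ := hper.exists_mem_Ico₀ one_pos t
    rw [e]; exact hbmin ⟨hy.1, hy.2.le⟩
  obtain ⟨a, ha, hamax⟩ := isCompact_Icc.exists_isMaxOn (nonempty_Icc.2 (by linarith : b ≤ b + 1))
    hf.continuousOn
  have hmax : ∀ t, f t ≤ f a := by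
    intro t
    obtain ⟨y, hy, e⟩ := hper.exists_mem_Ico one_pos t b
    rw [e]; exact hamax ⟨hy.1, hy.2.le⟩
  by_cases hc : f b = f a
  · have : ∀ t, f t = f b := fun t => le_antisymm (hc ▸ hmax t) (hmin t)
    refine ⟨b, b + 1 / 2, by linarith, by linarith, ?_, ?_⟩
    · intro x _ y _ _; rw [this x, this y]
    · intro x _ y _ _; rw [this x, this y]
  · have hlt : f b < f a := lt_of_le_of_ne (hmin a) hc
    have hba : b < a := lt_of_le_of_ne ha.1 (by rintro rfl; exact hc rfl)
    have hab : a < b + 1 := lt_of_le_of_ne ha.2 (by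
      rintro rfl; exact hc (hp b).symm)
    refine ⟨b, a, hba, hab, ?_, ?_⟩
    · intro x hx y hy hxy
      by_contra! hlt'
      have h1 := hmin y
      have h2 := hmax x
      have hxy' : x < y := lt_of_le_of_ne hxy (by rintro rfl; exact lt_irrefl _ hlt')
      have hbx : b < x := lt_of_le_of_ne hx.1 (by rintro rfl; linarith)
      have hya : y < a := lt_of_le_of_ne hy.2 (by rintro rfl; linarith)
      exact h b x y a hbx hxy' hya hab ⟨by linarith, hlt', by linarith, hlt⟩
    · intro x hx y hy hxy
      by_contra! hlt'
      have h1 := hmin x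
      have h2 := hmax y
      have hxy' : x < y := lt_of_le_of_ne hxy (by rintro rfl; exact lt_irrefl _ hlt')
      have hbx : a < x := lt_of_le_of_ne hx.1 (by rintro rfl; linarith)
      have hya : y < b + 1 := lt_of_le_of_ne hy.2 (by
        rintro rfl; have := hp b; linarith)
      exact h b a x y hba hbx hxy' hya ⟨hlt, by linarith, hlt', by linarith⟩

theorem angle_pi_real {x y : ℝ} (h : x * y < 0) : InnerProductGeometry.angle x y = Real.pi := by
  have hx : x ≠ 0 := by rintro rfl; simp at h
  have hy : y ≠ 0 := by rintro rfl; simp at h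
  rw [InnerProductGeometry.angle]
  have : (inner ℝ x y : ℝ) / (‖x‖ * ‖y‖) = -1 := by
    rw [← norm_mul, Real.norm_eq_abs, mul_comm x y] 
    have e : (inner ℝ x y : ℝ) = y * x := by simp
    rw [e, abs_of_neg (by linarith), div_neg, div_self (by rw [mul_comm]; exact h.ne)]
  rw [this, Real.arccos_neg_one]

theorem tc_of_four (F : AddCircle (1 : ℝ) → ℝ) (a b c d : ℝ) (h0 : 0 ≤ a) (ab : a < b) (bc : b < c)
    (cd : c < d) (d1 : d < 1)
    (h1 : (F b - F a) * (F c - F b) < 0) (h2 : (F c - F b) * (F d - F c) < 0)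
    (h3 : (F d - F c) * (F a - F d) < 0) (h4 : (F a - F d) * (F b - F a) < 0) :
    ENNReal.ofReal (4 * Real.pi) ≤ loopTC F := by
  let u : ℕ → ℝ := fun i => if i = 0 then a else if i = 1 then b else if i = 2 then c else d
  have hu : LoopInscribed 3 u := by
    constructor
    · intro i hi
      interval_cases i <;> simp [u, ab, bc, cd]
    · intro i hi
      interval_cases i <;> simp only [u] <;> norm_num <;> constructor <;> linarith
  have nab : F a ≠ F b := by intro e; rw [e] at h1; simp at h1
  have nbc : F b ≠ F c := by intro e; rw [e] at h1; simp at h1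
  have ncd : F c ≠ F d := by intro e; rw [e] at h2; simp at h2
  have nda : F d ≠ F a := by intro e; rw [e] at h3; simp at h3
  have hl : loopVertexList F 3 u = [F a, F b, F c, F d] := by
    simp [loopVertexList, u, List.range_succ]
  have hcol : collapse [F a, F b, F c, F d] = [F a, F b, F c, F d] := by
    simp [collapse, nab, nbc, ncd]
  have hcc : cyclicCollapse [F a, F b, F c, F d] = [F a, F b, F c, F d] := by
    rw [cyclicCollapse, hcol]
    simp [nda]
  have htc : loopPolyTC F 3 u = 4 * Real.pi := by
    rw [loopPolyTC, hl, hcc]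
    simp only [List.take, List.cons_append, List.nil_append, turnSum]
    rw [angle_pi_real h1, angle_pi_real h2, angle_pi_real h3, angle_pi_real h4]
    ring
  rw [← htc]
  exact le_iSup_of_le 3 (le_iSup_of_le u (le_iSup_of_le hu le_rfl))

theorem noAlt_of_tc (F : AddCircle (1 : ℝ) → ℝ) (h : ¬ ENNReal.ofReal (4 * Real.pi) ≤ loopTC F) :
    NoAlt fun t : ℝ => F t := by
  have hp : ∀ t : ℝ, F ((t - 1 : ℝ) : AddCircle (1 : ℝ)) = F (t : AddCircle (1 : ℝ)) := by
    intro t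
    rw [AddCircle.coe_sub, AddCircle.coe_period, sub_zero]
  -- reduce to `a ∈ [0,1)`
  have key : ∀ a b c d : ℝ, a ∈ Ico (0 : ℝ) 1 → a < b → b < c → c < d → d < a + 1 →
      ¬ (F a < F b ∧ F c < F b ∧ F c < F d ∧ F a < F d) := by
    rintro a b c d ha ab bc cd da ⟨h1, h2, h3, h4⟩
    apply h
    rcases lt_or_ge d 1 with d1 | d1
    · exact tc_of_four F a b c d ha.1 ab bc cd d1 (by nlinarith) (by nlinarith) (by nlinarith)
        (by nlinarith)
    rw [← hp d] at h3 h4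
    rcases lt_or_ge c 1 with c1 | c1
    · exact tc_of_four F (d - 1) a b c (by linarith) (by linarith) ab bc c1 (by nlinarith)
        (by nlinarith) (by nlinarith) (by nlinarith)
    rw [← hp c] at h2 h3
    rcases lt_or_ge b 1 with b1 | b1
    · exact tc_of_four F (c - 1) (d - 1) a b (by linarith) (by linarith) (by linarith) ab b1
        (by nlinarith) (by nlinarith) (by nlinarith) (by nlinarith)
    rw [← hp b] at h1 h2
    exact tc_of_four F (b - 1) (c - 1) (d - 1) a (by linarith) (by linarith) (by linarith)
      (by linarith) ha.2 (by nlinarith) (by nlinarith) (by nlinarith) (by nlinarith)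
  intro a b c d ab bc cd da
  have hz : ∀ t : ℝ, F ((t - ⌊a⌋ : ℝ) : AddCircle (1 : ℝ)) = F (t : AddCircle (1 : ℝ)) := by
    intro t
    congr 1
    rw [AddCircle.coe_sub, sub_eq_self, AddCircle.coe_eq_zero_iff]
    exact ⟨⌊a⌋, by simp⟩
  have := key (a - ⌊a⌋) (b - ⌊a⌋) (c - ⌊a⌋) (d - ⌊a⌋)
    ⟨by linarith [Int.floor_le a], by linarith [Int.lt_floor_add_one a]⟩ (by linarith) (by linarith)
    (by linarith) (by linarith)
  simpa only [hz] using this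

theorem coe_circle_eq {b x y : ℝ} (hx : x ∈ Icc b (b + 1)) (hy : y ∈ Icc b (b + 1))
    (h : (x : AddCircle (1 : ℝ)) = y) : x = y ∨ (x = b ∧ y = b + 1) ∨ (x = b + 1 ∧ y = b) := by
  have : Fact ((0 : ℝ) < 1) := ⟨one_pos⟩
  have hb : ((b + 1 : ℝ) : AddCircle (1 : ℝ)) = (b : ℝ) := AddCircle.coe_add_period 1 b
  rcases eq_or_lt_of_le hx.2 with h1 | h1 <;> rcases eq_or_lt_of_le hy.2 with h2 | h2
  · left; rw [h1, h2]
  · right; right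
    refine ⟨h1, ?_⟩
    rw [h1, hb, AddCircle.coe_eq_coe_iff_of_mem_Ico (a := b) ⟨le_rfl, by linarith⟩ ⟨hy.1, h2⟩] at h
    exact h.symm
  · right; left
    refine ⟨?_, h2⟩
    rw [h2, hb, AddCircle.coe_eq_coe_iff_of_mem_Ico (a := b) ⟨hx.1, h1⟩ ⟨le_rfl, by linarith⟩] at h
    exact h
  · left
    exact (AddCircle.coe_eq_coe_iff_of_mem_Ico (a := b) ⟨hx.1, h1⟩ ⟨hy.1, h2⟩).1 h

theorem unknot_of_noAlt (κ : AddCircle (1 : ℝ) → ℂ × ℝ) (hκ : Continuous κ)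
    (hinj : Function.Injective κ) (hN : NoAlt fun t : ℝ => (κ t).2) :
    AmbIso (range κ) stdCircle := by
  have : Fact ((0 : ℝ) < 1) := ⟨one_pos⟩
  have hc : Continuous fun t : ℝ => κ t := hκ.comp (AddCircle.continuous_mk' 1)
  have hper : ∀ t : ℝ, κ ((t + 1 : ℝ) : AddCircle (1 : ℝ)) = κ (t : ℝ) := fun t => by
    rw [AddCircle.coe_add_period 1 t]
  obtain ⟨b, a, hba, hab, hm, han⟩ := NoAlt.exists_arcs (continuous_snd.comp hc)
    (fun t => by simp only [Function.comp]; rw [hper]) hN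
  have pα : ∀ t ∈ Icc (0 : ℝ) 1, b + t * (a - b) ∈ Icc b a := fun t ht =>
    ⟨by nlinarith [ht.1], by nlinarith [ht.2]⟩
  have pβ : ∀ t ∈ Icc (0 : ℝ) 1, b + 1 - t * (b + 1 - a) ∈ Icc a (b + 1) := fun t ht =>
    ⟨by nlinarith [ht.2], by nlinarith [ht.1]⟩
  have key : range κ = (fun t : ℝ => κ ((b + t * (a - b) : ℝ) : AddCircle (1 : ℝ))) '' Icc 0 1 ∪
      (fun t : ℝ => κ ((b + 1 - t * (b + 1 - a) : ℝ) : AddCircle (1 : ℝ))) '' Icc 0 1 := by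
    apply Subset.antisymm
    · rintro _ ⟨z, rfl⟩
      have hz : z ∈ ((↑) : ℝ → AddCircle (1 : ℝ)) '' Ico b (b + 1) := by
        rw [AddCircle.coe_image_Ico_eq]; trivial
      obtain ⟨x, hx, rfl⟩ := hz
      rcases le_total x a with h | h
      · left
        refine ⟨(x - b) / (a - b), ⟨div_nonneg (by linarith [hx.1]) (by linarith),
          (div_le_one (by linarith)).2 (by linarith)⟩, ?_⟩
        have : b + (x - b) / (a - b) * (a - b) = x := by
          rw [div_mul_cancel₀ _ (by linarith)]; ring
        simp only [this]
      · right
        refine ⟨(b + 1 - x) / (b + 1 - a), ⟨div_nonneg (by linarith [hx.2]) (by linarith),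
          (div_le_one (by linarith)).2 (by linarith)⟩, ?_⟩
        have : b + 1 - (b + 1 - x) / (b + 1 - a) * (b + 1 - a) = x := by
          rw [div_mul_cancel₀ _ (by linarith)]; ring
        simp only [this]
    · rintro _ (⟨t, _, rfl⟩ | ⟨t, _, rfl⟩) <;> exact mem_range_self _
  rw [key]
  apply two_arcs_unknot
  · exact hc.comp (by fun_prop : Continuous fun t : ℝ => b + t * (a - b))
  · exact hc.comp (by fun_prop : Continuous fun t : ℝ => b + 1 - t * (b + 1 - a))
  · intro t ht s hs h
    have h1 := pα t ht
    have h2 := pα s hs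
    rcases coe_circle_eq ⟨h1.1, by linarith [h1.2]⟩ ⟨h2.1, by linarith [h2.2]⟩ (hinj h)
      with h | h | h
    · exact mul_right_cancel₀ (sub_ne_zero.2 hba.ne') (by linarith : t * (a - b) = s * (a - b))
    · linarith [h.2, h2.2]
    · linarith [h.1, h1.2]
  · intro t ht s hs h
    have h1 := pβ t ht
    have h2 := pβ s hs
    rcases coe_circle_eq ⟨by linarith [h1.1], h1.2⟩ ⟨by linarith [h2.1], h2.2⟩ (hinj h)
      with h | h | h
    · exact mul_right_cancel₀ (sub_ne_zero.2 hab.ne')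
        (by linarith : t * (b + 1 - a) = s * (b + 1 - a))
    · linarith [h.1, h1.1]
    · linarith [h.2, h2.1]
  · simp only [zero_mul, add_zero, sub_zero]; rw [hper]
  · congr 2; ring
  · intro t ht s hs h
    have h1 := pα t ht
    have h2 := pβ s hs
    rcases coe_circle_eq ⟨h1.1, by linarith [h1.2]⟩ ⟨by linarith [h2.1], h2.2⟩ (hinj h)
      with h | h | h
    · have e1 : (1 - t) * (a - b) = 0 := by nlinarith [h1.2, h2.1]
      have e2 : (1 - s) * (b + 1 - a) = 0 := by nlinarith [h1.2, h2.1]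
      have e1 := (mul_eq_zero.1 e1).resolve_right (sub_ne_zero.2 hba.ne')
      have e2 := (mul_eq_zero.1 e2).resolve_right (sub_ne_zero.2 hab.ne')
      exact ⟨by linarith, Or.inr (by linarith)⟩
    · have e1 : t * (a - b) = 0 := by linarith [h.1]
      have e2 : s * (b + 1 - a) = 0 := by linarith [h.2]
      have e1 := (mul_eq_zero.1 e1).resolve_right (sub_ne_zero.2 hba.ne')
      have e2 := (mul_eq_zero.1 e2).resolve_right (sub_ne_zero.2 hab.ne')
      exact ⟨by linarith, Or.inl (by linarith)⟩
    · linarith [h.1, h1.2]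
  · intro t ht s hs hts
    exact hm (pα t ht) (pα s hs) (by nlinarith)
  · intro t ht s hs hts
    exact han (pβ s hs) (pβ t ht) (by nlinarith)

theorem unknot_of_linear_pos (κ : AddCircle (1 : ℝ) → ℂ × ℝ) (hκ : Continuous κ)
    (hinj : Function.Injective κ) (A B C : ℝ) (hB : 0 < B)
    (hN : NoAlt fun t : ℝ => A * (κ t).1.re + B * (κ t).2 + C * (κ t).1.im) :
    AmbIso (range κ) stdCircle := by
  have h1 := AmbIso.fiber (X := ℂ) (fun p => A * p.1.re + B * p.2 + C * p.1.im) (by fun_prop)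
    (fun x y z hyz => by simp only; nlinarith)
    (fun x => tendsto_atTop_add_const_right _ (C * x.im)
      (tendsto_atTop_add_const_left _ (A * x.re)
        ((tendsto_id (α := ℝ) (x := atTop)).const_mul_atTop hB)))
    (fun x => tendsto_atBot_add_const_right _ (C * x.im)
      (tendsto_atBot_add_const_left _ (A * x.re)
        ((tendsto_id (α := ℝ) (x := atBot)).const_mul_atBot hB))) (range κ)
  refine h1.trans ?_
  rw [← range_comp]
  refine unknot_of_noAlt _ ?_ ?_ hN
  · exact Continuous.comp (by fun_prop) hκ
  · refine Function.Injective.comp ?_ hinj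
    rintro ⟨x, y⟩ ⟨x', y'⟩ h
    simp only [Prod.mk.injEq] at h
    obtain ⟨rfl, h⟩ := h
    have : y = y' := mul_left_cancel₀ hB.ne' (by linarith : B * y = B * y')
    rw [this]

theorem unknot_of_linear_ne (κ : AddCircle (1 : ℝ) → ℂ × ℝ) (hκ : Continuous κ)
    (hinj : Function.Injective κ) (A B C : ℝ) (hB : B ≠ 0)
    (hN : NoAlt fun t : ℝ => A * (κ t).1.re + B * (κ t).2 + C * (κ t).1.im) :
    AmbIso (range κ) stdCircle := by
  rcases lt_or_gt_of_ne hB with h | h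
  · refine unknot_of_linear_pos κ hκ hinj (-A) (-B) (-C) (by linarith) ?_
    have := hN.neg (fun t => by rw [AddCircle.coe_add_period 1 t])
    convert this using 2
    ring
  · exact unknot_of_linear_pos κ hκ hinj A B C h hN

theorem unknot_of_linear_translate (κ : AddCircle (1 : ℝ) → ℂ × ℝ) (hκ : Continuous κ)
    (hinj : Function.Injective κ) (A C : ℝ) (u : ℂ) (hB : A * u.re + C * u.im ≠ 0)
    (hN : NoAlt fun t : ℝ => A * (κ t).1.re + C * (κ t).1.im) :
    AmbIso (range κ) stdCircle := by
  have h1 := AmbIso.translate (V := ℂ) (Y := ℝ) (fun y => y • u) (by fun_prop) (range κ)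
  refine h1.trans ?_
  rw [← range_comp]
  refine unknot_of_linear_ne _ ?_ ?_ A (-(A * u.re + C * u.im)) C (neg_ne_zero.2 hB) ?_
  · exact Continuous.comp (by fun_prop) hκ
  · refine Function.Injective.comp ?_ hinj
    rintro ⟨x, y⟩ ⟨x', y'⟩ h
    simp only [Prod.mk.injEq] at h
    obtain ⟨h, rfl⟩ := h
    rw [add_right_cancel h]
  · convert hN using 2
    simp
    ring

theorem unknot_of_linear (κ : AddCircle (1 : ℝ) → ℂ × ℝ) (hκ : Continuous κ)
    (hinj : Function.Injective κ) (A B C : ℝ) (h : A ≠ 0 ∨ B ≠ 0 ∨ C ≠ 0)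
    (hN : NoAlt fun t : ℝ => A * (κ t).1.re + B * (κ t).2 + C * (κ t).1.im) :
    AmbIso (range κ) stdCircle := by
  by_cases hB : B = 0
  · subst hB
    simp only [zero_mul, add_zero] at hN
    rcases h with h | h | h
    · exact unknot_of_linear_translate κ hκ hinj A C 1 (by simpa using h) hN
    · exact absurd rfl h
    · exact unknot_of_linear_translate κ hκ hinj A C Complex.I (by simpa using h) hN
  · exact unknot_of_linear_ne κ hκ hinj A B C hB hN

/-- Coordinates on `ℝ³` in which the second coordinate is the chosen height. -/
noncomputable def coordHomeo : EuclideanSpace ℝ (Fin 3) ≃ₜ ℂ × ℝ where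
  toFun p := (⟨p 0, p 2⟩, p 1)
  invFun q := !₂[q.1.re, q.2, q.1.im]
  left_inv p := by ext i; fin_cases i <;> simp
  right_inv q := by simp
  continuous_toFun := by
    refine Continuous.prodMk ?_ (by fun_prop)
    exact Complex.equivRealProdCLM.symm.continuous.comp
      (by fun_prop : Continuous fun p : EuclideanSpace ℝ (Fin 3) => (p 0, p 2))
  continuous_invFun := by
    refine (PiLp.continuous_toLp 2 _).comp (continuous_pi fun i => ?_)
    fin_cases i
    · exact Complex.continuous_re.comp continuous_fst
    · exact continuous_snd
    · exact Complex.continuous_im.comp continuous_fst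

theorem coordHomeo_circle :
    coordHomeo '' {p : EuclideanSpace ℝ (Fin 3) | p 0 ^ 2 + p 1 ^ 2 = 1 ∧ p 2 = 0} =
      stdCircle := by
  rw [coordHomeo.image_eq_preimage_symm]
  ext q
  simp [coordHomeo, stdCircle]

open scoped RealInnerProductSpace in
/-- Milnor's lemma: for a knotted closed curve `K` in `ℝ³` and any unit
vector `v`, the projection `t ↦ ⟨K t, v⟩` of `K` to the line in direction `v` has total
curvature at least `4π`. -/
theorem milnor_projection_lemma (K : AddCircle (1 : ℝ) → EuclideanSpace ℝ (Fin 3))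
    (hK : Continuous K) (hinj : Function.Injective K) (hknot : ¬ Unknotted K)
    (v : EuclideanSpace ℝ (Fin 3)) (hv : ‖v‖ = 1) :
    ENNReal.ofReal (4 * Real.pi) ≤ loopTC (fun t => (⟪K t, v⟫ : ℝ)) := by
  by_contra hlt
  apply hknot
  have hN := noAlt_of_tc _ hlt
  have hv0 : v 0 ≠ 0 ∨ v 1 ≠ 0 ∨ v 2 ≠ 0 := by
    by_contra hcon
    push Not at hcon
    have : v = 0 := by
      ext i
      fin_cases i
      · exact hcon.1
      · exact hcon.2.1
      · exact hcon.2.2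
    rw [this, norm_zero] at hv
    exact zero_ne_one hv
  have h : AmbIso (range K) {p : EuclideanSpace ℝ (Fin 3) | p 0 ^ 2 + p 1 ^ 2 = 1 ∧ p 2 = 0} := by
    apply AmbIso.transport coordHomeo
    rw [coordHomeo_circle, ← range_comp]
    refine unknot_of_linear _ (coordHomeo.continuous.comp hK) (coordHomeo.injective.comp hinj)
      (v 0) (v 1) (v 2) hv0 ?_
    convert hN using 2
    simp [coordHomeo, PiLp.inner_apply, Fin.sum_univ_three]
  exact h
end
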